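/- arXiv:2309.16616 — 9 statements merged into one kernel-verified Lean document; each statement's English description precedes it below -/
import Mathlib

section
/- Let A be an integral domain and Γ a set of nonzero elements of A. If every nonzero prime ideal of A contains some element of Γ, then every nonzero element of A divides a (possibly empty) finite product of elements of Γ. -/
/-- **Kaplansky-type lemma, part (i).** Let `A` be an integral domain and `Γ` a set of
nonzero elements of `A`. If every nonzero prime ideal of `A` contains some element of
`Γ`, then every nonzero element of `A` divides a (possibly empty) finite product of
elements of `Γ`, i.e. divides an element of the multiplicative submonoid generated
by `Γ`. -/
theorem stmt_0 {A : Type*} [CommRing A] [IsDomain A] (Γ : Set A)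
    (hΓ : ∀ g ∈ Γ, g ≠ (0 : A))
    (h : ∀ P : Ideal A, P.IsPrime → P ≠ ⊥ → ∃ g ∈ Γ, g ∈ P) :
    ∀ x : A, x ≠ 0 → ∃ y ∈ Submonoid.closure Γ, x ∣ y := by
  intro x hx
  by_contra! hdvd
  -- Were `x` to divide no product, an ideal maximal among those containing `x` and
  -- disjoint from the submonoid generated by `Γ` would be a nonzero prime missing `Γ`.
  have hdisj : Disjoint (Ideal.span {x} : Set A) (Submonoid.closure Γ) :=
    Set.disjoint_left.mpr fun y hy hyS ↦ hdvd y hyS (Ideal.mem_span_singleton.mp hy)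
  obtain ⟨P, hP, hxP, hPS⟩ := Ideal.exists_le_prime_disjoint _ _ hdisj
  have hxmem : x ∈ P := hxP (Ideal.mem_span_singleton_self x)
  obtain ⟨g, hg, hgP⟩ := h P hP (Submodule.ne_bot_iff P |>.mpr ⟨x, hxmem, hx⟩)
  exact Set.disjoint_left.mp hPS hgP (Submonoid.subset_closure hg)
end

section
/- An atomic domain A is a half-factorial domain if and only if every atom of A is good. -/
/-!
A shortest unbalanced atomic equality is irredundant: if proper subproducts of the two sides were
associated, then cancelling them would leave associated complementary subproducts, and both of these
relations are shorter, hence balanced, so the equality itself would be balanced. Thus if no atom is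
bad there are no unbalanced equalities at all. To make the induction run, `card_eq_of_associated`
treats atomic products that are merely associated; the unit is absorbed into one of the atoms when
an honest equality is needed. Conversely, in a half-factorial domain every atomic equality is
balanced, so bad atoms cannot exist.
-/

/-- An *atomic equality* `a₁⋯aₙ = b₁⋯bₘ` (n, m ≥ 1), encoded by two nonempty
multisets of irreducible elements with equal products. -/
def IsAtomicEquality {A : Type*} [CommRing A] (s t : Multiset A) : Prop :=
  s ≠ 0 ∧ t ≠ 0 ∧ (∀ a ∈ s, Irreducible a) ∧ (∀ b ∈ t, Irreducible b) ∧ s.prod = t.prod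

/-- The atomic equality given by `s` and `t` is *irredundant* if no product of a
nonempty proper sub-multiset of `s` is associated to a product of a nonempty proper
sub-multiset of `t`. -/
def IsIrredundant {A : Type*} [CommRing A] (s t : Multiset A) : Prop :=
  ∀ u v : Multiset A, u ≤ s → v ≤ t → u ≠ 0 → v ≠ 0 → u ≠ s → v ≠ t →
    ¬ Associated u.prod v.prod

/-- A *bad atom* is an irreducible element appearing in some irredundant unbalanced
atomic equality. -/
def IsBadAtom {A : Type*} [CommRing A] (x : A) : Prop :=
  Irreducible x ∧ ∃ s t : Multiset A, IsAtomicEquality s t ∧ IsIrredundant s t ∧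
    Multiset.card s ≠ Multiset.card t ∧ (x ∈ s ∨ x ∈ t)

/-- A *good atom* is an irreducible element that is not a bad atom. -/
def IsGoodAtom {A : Type*} [CommRing A] (x : A) : Prop :=
  Irreducible x ∧ ¬ IsBadAtom x

/-- A ring is *atomic* if every nonzero nonunit is a finite product of irreducible
elements. -/
def IsAtomicDomain (A : Type*) [CommRing A] : Prop :=
  ∀ x : A, x ≠ 0 → ¬ IsUnit x → ∃ s : Multiset A, (∀ a ∈ s, Irreducible a) ∧ s.prod = x

/-- An *HF-element*: all its factorizations into irreducible elements have the same
number of factors. -/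
def IsHFElement {A : Type*} [CommRing A] (x : A) : Prop :=
  ∀ s t : Multiset A, (∀ a ∈ s, Irreducible a) → (∀ b ∈ t, Irreducible b) →
    s.prod = x → t.prod = x → Multiset.card s = Multiset.card t

/-- A *half-factorial domain*: an atomic domain in which every nonzero nonunit is an
HF-element. -/
def IsHFD (A : Type*) [CommRing A] : Prop :=
  IsAtomicDomain A ∧ ∀ x : A, x ≠ 0 → ¬ IsUnit x → IsHFElement x

theorem prod_ne_zero_of_irreducible {A : Type*} [CommRing A] [IsDomain A] {s : Multiset A}
    (hs : ∀ a ∈ s, Irreducible a) : s.prod ≠ 0 :=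
  Multiset.prod_ne_zero fun h => (hs 0 h).ne_zero rfl

theorem not_isUnit_prod_of_irreducible {A : Type*} [CommRing A] {s : Multiset A}
    (hs : ∀ a ∈ s, Irreducible a) (h : s ≠ 0) : ¬ IsUnit s.prod := by
  obtain ⟨a, ha⟩ := Multiset.exists_mem_of_ne_zero h
  exact fun hu => (hs a ha).not_isUnit (isUnit_of_dvd_unit (Multiset.dvd_prod ha) hu)

/-- If all atoms are good, then atomic products that agree up to a unit have equally many factors.
The bound `n` on the total number of factors drives the induction. -/
theorem card_eq_of_associated {A : Type*} [CommRing A] [IsDomain A]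
    (hgood : ∀ x : A, Irreducible x → IsGoodAtom x) (n : ℕ) :
    ∀ s t : Multiset A, Multiset.card s + Multiset.card t ≤ n →
      (∀ a ∈ s, Irreducible a) → (∀ b ∈ t, Irreducible b) → Associated s.prod t.prod →
      Multiset.card s = Multiset.card t := by
  induction n with
  | zero =>
    intro s t hn _ _ _
    omega
  | succ n ih =>
    intro s t hn hs ht hst
    rcases eq_or_ne t 0 with rfl | ht0
    · by_contra hc
      refine not_isUnit_prod_of_irreducible hs (fun h => hc (by rw [h])) ?_
      exact hst.isUnit_iff.mpr (by simp)
    rcases Multiset.empty_or_exists_mem s with rfl | ⟨a, ha⟩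
    · exact absurd (hst.isUnit_iff.mp (by simp)) (not_isUnit_prod_of_irreducible ht ht0)
    obtain ⟨s', rfl⟩ := Multiset.exists_cons_of_mem ha
    obtain ⟨ε, hε⟩ := hst
    -- Absorb the unit `ε` into the atom `a`.
    have hr : ∀ b ∈ (a * ε) ::ₘ s', Irreducible b := by
      intro b hb
      rcases Multiset.mem_cons.mp hb with rfl | hb
      · exact (irreducible_mul_units ε).mpr (hs a (Multiset.mem_cons_self a s'))
      · exact hs b (Multiset.mem_cons_of_mem hb)
    have hcard : Multiset.card ((a * ε) ::ₘ s') = Multiset.card (a ::ₘ s') := by simp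
    have hrt : ((a * ε) ::ₘ s').prod = t.prod := by
      rw [← hε, Multiset.prod_cons, Multiset.prod_cons]
      ring
    rw [← hcard] at hn ⊢
    have hr0 : (a * ε) ::ₘ s' ≠ 0 := Multiset.cons_ne_zero
    generalize (a * ε) ::ₘ s' = r at *
    by_contra hne
    obtain ⟨b, hb⟩ := Multiset.exists_mem_of_ne_zero ht0
    refine (hgood b (ht b hb)).2
      ⟨ht b hb, r, t, ⟨hr0, ht0, hr, ht, hrt⟩, ?_, hne, Or.inr hb⟩
    intro u v hu hv hu0 _ hur _ huv
    obtain ⟨u', rfl⟩ := Multiset.le_iff_exists_add.mp hu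
    obtain ⟨v', rfl⟩ := Multiset.le_iff_exists_add.mp hv
    have hu1 : 0 < Multiset.card u := Multiset.card_pos.mpr hu0
    have hu1' : 0 < Multiset.card u' := Multiset.card_pos.mpr fun h => hur (by simp [h])
    simp only [Multiset.card_add, Multiset.prod_add, Multiset.mem_add] at *
    have huirr : ∀ a ∈ u, Irreducible a := fun a ha => hr a (Or.inl ha)
    have huv' : Associated u'.prod v'.prod :=
      Associated.of_mul_left (Associated.of_eq hrt) huv (prod_ne_zero_of_irreducible huirr)
    have h1 := ih u v (by omega) huirr (fun b hb => ht b (Or.inl hb)) huv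
    have h2 := ih u' v' (by omega) (fun a ha => hr a (Or.inr ha)) (fun b hb => ht b (Or.inr hb)) huv'
    omega

/-- **Remark 5(ii).** An atomic domain `A` is a half-factorial domain if and only if
every atom of `A` is good. -/
theorem stmt_2 {A : Type*} [CommRing A] [IsDomain A] (hA : IsAtomicDomain A) :
    IsHFD A ↔ ∀ x : A, Irreducible x → IsGoodAtom x := by
  constructor
  · rintro ⟨_, hHF⟩ x hx
    refine ⟨hx, ?_⟩
    rintro ⟨_, s, t, ⟨hs0, _, hs, ht, hst⟩, _, hne, _⟩
    exact hne (hHF s.prod (prod_ne_zero_of_irreducible hs)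
      (not_isUnit_prod_of_irreducible hs hs0) s t hs ht rfl hst.symm)
  · intro hgood
    refine ⟨hA, fun x _ _ s t hs ht hsx htx => ?_⟩
    exact card_eq_of_associated hgood _ s t le_rfl hs ht (Associated.of_eq (hsx.trans htx.symm))
end

section
/- In an atomic domain A, every prime element of A is a good atom. -/
theorem card_eq_one_of_irreducible_prod {A : Type*} [CommRing A] {t : Multiset A}
    (ht0 : t ≠ 0) (ht : ∀ a ∈ t, Irreducible a) (h : Irreducible t.prod) :
    Multiset.card t = 1 := by
  obtain ⟨b, hb⟩ := Multiset.exists_mem_of_ne_zero ht0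
  obtain ⟨r, rfl⟩ := Multiset.exists_cons_of_mem hb
  rw [Multiset.prod_cons] at h
  have hr : r = 0 := by
    by_contra hr
    obtain ⟨c, hc⟩ := Multiset.exists_mem_of_ne_zero hr
    have hu : IsUnit r.prod := (h.isUnit_or_isUnit rfl).resolve_left (ht b hb).not_isUnit
    exact (ht c (Multiset.mem_cons_of_mem hc)).not_isUnit
      (isUnit_of_dvd_unit (Multiset.dvd_prod hc) hu)
  simp [hr]

theorem card_eq_card_of_prime_mem {A : Type*} [CommRing A] [IsDomain A] {p : A} (hp : Prime p)
    {s t : Multiset A} (h : IsAtomicEquality s t) (hirr : IsIrredundant s t) (hps : p ∈ s) :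
    Multiset.card s = Multiset.card t := by
  obtain ⟨hs0, ht0, hs, ht, hprod⟩ := h
  obtain ⟨q, hqt, hpq⟩ := hp.exists_mem_multiset_dvd (hprod ▸ Multiset.dvd_prod hps)
  have hassoc : Associated p q := hp.irreducible.associated_of_dvd (ht q hqt) hpq
  by_cases h1 : {p} = s
  · subst h1
    rw [card_eq_one_of_irreducible_prod ht0 ht (by simpa [← hprod] using hp.irreducible)]
    simp
  by_cases h2 : {q} = t
  · subst h2
    rw [card_eq_one_of_irreducible_prod hs0 hs (by simpa [hprod] using ht q hqt)]
    simp
  exact absurd (by simpa using hassoc)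
    (hirr {p} {q} (Multiset.singleton_le.2 hps) (Multiset.singleton_le.2 hqt) (by simp) (by simp)
      h1 h2)

theorem IsAtomicEquality.symm {A : Type*} [CommRing A] {s t : Multiset A}
    (h : IsAtomicEquality s t) : IsAtomicEquality t s :=
  ⟨h.2.1, h.1, h.2.2.2.1, h.2.2.1, h.2.2.2.2.symm⟩

theorem IsIrredundant.symm {A : Type*} [CommRing A] {s t : Multiset A}
    (h : IsIrredundant s t) : IsIrredundant t s :=
  fun u v hu hv hu0 hv0 hut hvs ha => h v u hv hu hv0 hu0 hvs hut ha.symm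

/-- **Remark 5(i).** In an atomic domain, every prime element is a good atom. -/
theorem stmt_3 {A : Type*} [CommRing A] [IsDomain A] (hA : IsAtomicDomain A)
    (p : A) (hp : Prime p) : IsGoodAtom p := by
  refine ⟨hp.irreducible, ?_⟩
  rintro ⟨-, s, t, heq, hirr, hcard, hps | hpt⟩
  · exact hcard (card_eq_card_of_prime_mem hp heq hirr hps)
  · exact hcard (card_eq_card_of_prime_mem hp heq.symm hirr.symm hpt).symm
end

section
/- An atomic domain A is a half-factorial domain if and only if every nonzero prime ideal of A contains a good atom. -/
/-- The unit in an association can be absorbed into one factor of a nonempty product of atoms. -/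
theorem exists_prod_eq_of_associated {A : Type*} [CommRing A] {t : Multiset A} {x : A}
    (h0 : t ≠ 0) (ht : ∀ b ∈ t, Irreducible b) (h : Associated t.prod x) :
    ∃ t' : Multiset A, (∀ b ∈ t', Irreducible b) ∧ t'.prod = x ∧
      Multiset.card t' = Multiset.card t := by
  obtain ⟨c, rfl⟩ := h
  obtain ⟨b, hb⟩ := Multiset.exists_mem_of_ne_zero h0
  obtain ⟨r, rfl⟩ := Multiset.exists_cons_of_mem hb
  refine ⟨(b * c) ::ₘ r, ?_, ?_, by simp⟩
  · intro y hy
    rcases Multiset.mem_cons.1 hy with rfl | hy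
    · exact (irreducible_mul_units c).2 (ht b hb)
    · exact ht y (Multiset.mem_cons_of_mem hy)
  · simp only [Multiset.prod_cons]
    ring

theorem eq_zero_of_isUnit_prod {A : Type*} [CommRing A] {t : Multiset A}
    (ht : ∀ b ∈ t, Irreducible b) (h : IsUnit t.prod) : t = 0 := by
  by_contra h0
  obtain ⟨b, hb⟩ := Multiset.exists_mem_of_ne_zero h0
  exact (ht b hb).not_isUnit (isUnit_of_dvd_unit (Multiset.dvd_prod hb) h)

/-- A product of good atoms has a unique factorization length: split a redundant equality into
two shorter ones, until irredundance and goodness force the lengths to agree. -/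
theorem card_eq_of_good {A : Type*} [CommRing A] [IsDomain A] :
    ∀ (n : ℕ) (s t : Multiset A), Multiset.card s = n → (∀ a ∈ s, IsGoodAtom a) →
      (∀ b ∈ t, Irreducible b) → Associated t.prod s.prod →
      Multiset.card s = Multiset.card t := by
  intro n
  induction n using Nat.strong_induction_on with
  | _ n ih =>
  intro s t hn hs ht hst
  rcases eq_or_ne s 0 with rfl | hs0
  · rw [eq_zero_of_isUnit_prod ht (hst.symm.isUnit (by simp))]
  rcases eq_or_ne t 0 with rfl | ht0
  · rw [eq_zero_of_isUnit_prod (fun a ha => (hs a ha).1) (hst.isUnit (by simp))]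
  obtain ⟨t', ht', hp, hc⟩ := exists_prod_eq_of_associated ht0 ht hst
  rw [← hc]
  have ht'0 : t' ≠ 0 := by
    rw [← Multiset.card_pos, hc]
    exact Multiset.card_pos.2 ht0
  by_cases hirr : IsIrredundant s t'
  · by_contra hne
    obtain ⟨a, ha⟩ := Multiset.exists_mem_of_ne_zero hs0
    exact (hs a ha).2 ⟨(hs a ha).1, s, t',
      ⟨hs0, ht'0, fun a ha => (hs a ha).1, ht', hp.symm⟩, hirr, hne, Or.inl ha⟩
  · unfold IsIrredundant at hirr
    push Not at hirr
    obtain ⟨u, v, hu, hv, hu0, hv0, hus, hvt, huv⟩ := hirr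
    obtain ⟨u', rfl⟩ := Multiset.le_iff_exists_add.1 hu
    obtain ⟨v', rfl⟩ := Multiset.le_iff_exists_add.1 hv
    have hu'0 : u' ≠ 0 := by rintro rfl; simp at hus
    have h1 := Multiset.card_pos.2 hu0
    have h2 := Multiset.card_pos.2 hu'0
    simp only [Multiset.card_add, Multiset.prod_add, Multiset.mem_add] at *
    have hv_ne : v.prod ≠ 0 :=
      Multiset.prod_ne_zero fun h => (ht' 0 (Or.inl h)).ne_zero rfl
    have e1 := ih _ (by omega) u v rfl (fun a ha => hs a (Or.inl ha))
      (fun a ha => ht' a (Or.inl ha)) huv.symm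
    have e2 := ih _ (by omega) u' v' rfl (fun a ha => hs a (Or.inr ha))
      (fun a ha => ht' a (Or.inr ha))
      ((Associated.of_eq hp).of_mul_left huv.symm hv_ne)
    omega

/-- **Theorem 10 (Kaplansky-type theorem for HFDs).** An atomic domain `A` is a
half-factorial domain if and only if every nonzero prime ideal of `A` contains a
good atom. -/
theorem stmt_5 {A : Type*} [CommRing A] [IsDomain A] (hA : IsAtomicDomain A) :
    IsHFD A ↔ ∀ P : Ideal A, P.IsPrime → P ≠ ⊥ → ∃ a ∈ P, IsGoodAtom a := by
  constructor
  · rintro ⟨-, hHF⟩ P hP hP0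
    obtain ⟨x, hxP, hx0⟩ := Submodule.exists_mem_ne_zero_of_ne_bot hP0
    obtain ⟨s, hs, rfl⟩ := hA x hx0 fun h => hP.ne_top (Ideal.eq_top_of_isUnit_mem _ hxP h)
    obtain ⟨a, ha, haP⟩ := (hP.multiset_prod_mem_iff_exists_mem s).1 hxP
    refine ⟨a, haP, hs a ha, ?_⟩
    rintro ⟨-, u, v, ⟨hu0, -, hu, hv, huv⟩, -, hne, -⟩
    refine hne (hHF u.prod (Multiset.prod_ne_zero fun h => (hu 0 h).ne_zero rfl)
      (fun h => hu0 (eq_zero_of_isUnit_prod hu h)) u v hu hv rfl huv.symm)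
  · refine fun H => ⟨hA, fun x hx0 _ => ?_⟩
    obtain ⟨z, hzS, hxz⟩ : ∃ z ∈ Submonoid.closure {a : A | IsGoodAtom a}, x ∣ z := by
      by_contra! hno
      obtain ⟨P, hP, hxP, hdis⟩ := Ideal.exists_le_prime_disjoint (Ideal.span {x})
        (Submonoid.closure {a : A | IsGoodAtom a})
        (Set.disjoint_left.2 fun z hz hzS => hno z hzS (Ideal.mem_span_singleton.1 hz))
      have hxP' : x ∈ P := hxP (Ideal.mem_span_singleton_self x)
      obtain ⟨a, haP, ha⟩ := H P hP fun h => hx0 (by simpa [h] using hxP')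
      exact Set.disjoint_left.1 hdis haP (Submonoid.subset_closure ha)
    obtain ⟨g, hg, rfl⟩ := Submonoid.exists_multiset_of_mem_closure hzS
    obtain ⟨y, hy⟩ := hxz
    have hy0 : y ≠ 0 := by
      rintro rfl
      exact Multiset.prod_ne_zero (fun h => (hg 0 h).1.ne_zero rfl) (by simpa using hy)
    obtain ⟨w, hw, hwy⟩ : ∃ w : Multiset A, (∀ a ∈ w, Irreducible a) ∧ Associated w.prod y := by
      by_cases hyu : IsUnit y
      · exact ⟨0, by simp, by simpa using (associated_one_iff_isUnit.2 hyu).symm⟩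
      · obtain ⟨w, hw, rfl⟩ := hA y hy0 hyu
        exact ⟨w, hw, Associated.refl _⟩
    have key : ∀ s : Multiset A, (∀ a ∈ s, Irreducible a) → s.prod = x →
        Multiset.card g = Multiset.card s + Multiset.card w := by
      intro s hs hsx
      rw [← Multiset.card_add]
      refine card_eq_of_good _ g (s + w) rfl hg (fun b hb => ?_) ?_
      · exact (Multiset.mem_add.1 hb).elim (hs b) (hw b)
      · rw [Multiset.prod_add, hsx, hy]
        exact hwy.mul_left x
    intro s t hs ht hsx htx
    have h1 := key s hs hsx
    have h2 := key t ht htx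
    omega
end

section
/- Let A be an atomic domain and x a nonzero nonunit of A. If every prime ideal of A containing x contains a good atom, then x is an HF-element of A. -/
/-- A multiset of atoms whose product is associated to a product of good atoms has the same
cardinality. Stating this up to associates lets the induction pass to complementary factors. -/
lemma card_eq_of_forall_isGoodAtom {A : Type*} [CommRing A] [IsDomain A] (s t : Multiset A)
    (hs : ∀ a ∈ s, IsGoodAtom a) (ht : ∀ b ∈ t, Irreducible b)
    (hst : Associated s.prod t.prod) : Multiset.card s = Multiset.card t := by
  induction hn : Multiset.card s using Nat.strong_induction_on generalizing s t with
  | _ n ih =>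
  subst hn
  have eq_zero_of_isUnit : ∀ w : Multiset A, (∀ a ∈ w, Irreducible a) → IsUnit w.prod → w = 0 := by
    intro w hw hu
    by_contra hne
    obtain ⟨a, ha⟩ := Multiset.exists_mem_of_ne_zero hne
    exact (hw a ha).not_isUnit (isUnit_of_dvd_unit (Multiset.dvd_prod ha) hu)
  by_cases hs0 : s = 0
  · subst hs0
    have : t = 0 := eq_zero_of_isUnit t ht (hst.isUnit (by simp))
    simp [this]
  have ht0 : t ≠ 0 := by
    rintro rfl
    exact hs0 (eq_zero_of_isUnit s (fun a ha => (hs a ha).1) (hst.symm.isUnit (by simp)))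
  -- Absorb the unit into one factor of `t` to get an honest equality of products.
  obtain ⟨t', ht', ht'0, hcard, hprod⟩ : ∃ t' : Multiset A, (∀ b ∈ t', Irreducible b) ∧ t' ≠ 0 ∧
      Multiset.card t' = Multiset.card t ∧ s.prod = t'.prod := by
    obtain ⟨c, hc⟩ := hst.symm
    obtain ⟨d, hd⟩ := Multiset.exists_mem_of_ne_zero ht0
    obtain ⟨r, rfl⟩ := Multiset.exists_cons_of_mem hd
    refine ⟨(d * c) ::ₘ r, ?_, by simp, by simp, ?_⟩
    · intro b hb
      rcases Multiset.mem_cons.1 hb with rfl | hb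
      · exact (irreducible_mul_units c).2 (ht d hd)
      · exact ht b (Multiset.mem_cons_of_mem hb)
    · rw [← hc]
      simp only [Multiset.prod_cons]
      ring
  rw [← hcard]
  by_cases hirr : IsIrredundant s t'
  · by_contra hne
    obtain ⟨a, ha⟩ := Multiset.exists_mem_of_ne_zero hs0
    exact (hs a ha).2 ⟨(hs a ha).1, s, t',
      ⟨hs0, ht'0, fun a ha => (hs a ha).1, ht', hprod⟩, hirr, hne, Or.inl ha⟩
  · unfold IsIrredundant at hirr
    push Not at hirr
    obtain ⟨u, v, hu, hv, hu0, -, hus, -, huv⟩ := hirr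
    obtain ⟨u', rfl⟩ := Multiset.le_iff_exists_add.1 hu
    obtain ⟨v', rfl⟩ := Multiset.le_iff_exists_add.1 hv
    have hu'0 : u' ≠ 0 := by
      rintro rfl
      simp at hus
    have hu_pos := Multiset.card_pos.2 hu0
    have hu'_pos := Multiset.card_pos.2 hu'0
    have hu_prod : u.prod ≠ 0 := Multiset.prod_ne_zero fun h0 =>
      (hs 0 (Multiset.mem_add.2 (Or.inl h0))).1.ne_zero rfl
    have huv' : Associated u'.prod v'.prod := by
      rw [Multiset.prod_add, Multiset.prod_add] at hprod
      exact Associated.of_mul_left (Associated.of_eq hprod) huv hu_prod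
    have h1 := ih (Multiset.card u) (by simp; omega) u v
      (fun a ha => hs a (Multiset.mem_add.2 (Or.inl ha)))
      (fun a ha => ht' a (Multiset.mem_add.2 (Or.inl ha))) huv rfl
    have h2 := ih (Multiset.card u') (by simp; omega) u' v'
      (fun a ha => hs a (Multiset.mem_add.2 (Or.inr ha)))
      (fun a ha => ht' a (Multiset.mem_add.2 (Or.inr ha))) huv' rfl
    simp [h1, h2]

/-- Some multiple of `x` is a product of good atoms (possibly an empty product). -/
lemma exists_prod_isGoodAtom_eq_mul {A : Type*} [CommRing A] (x : A)
    (h : ∀ P : Ideal A, P.IsPrime → x ∈ P → ∃ a ∈ P, IsGoodAtom a) :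
    ∃ (g : Multiset A) (y : A), (∀ a ∈ g, IsGoodAtom a) ∧ g.prod = x * y := by
  by_cases hd : Disjoint ((Ideal.span {x} : Ideal A) : Set A)
      (Submonoid.closure {a : A | IsGoodAtom a} : Submonoid A)
  · obtain ⟨P, hP, hxP, hPS⟩ := Ideal.exists_le_prime_disjoint _ _ hd
    obtain ⟨a, haP, ha⟩ := h P hP (hxP (Ideal.mem_span_singleton_self x))
    exact (Set.disjoint_left.1 hPS haP (Submonoid.subset_closure ha)).elim
  · obtain ⟨z, hzx, hzS⟩ := Set.not_disjoint_iff.1 hd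
    obtain ⟨g, hg, rfl⟩ := Submonoid.exists_multiset_of_mem_closure hzS
    obtain ⟨y, hy⟩ := Ideal.mem_span_singleton.1 hzx
    exact ⟨g, y, hg, hy⟩

/-- **Corollary.** Let `x` be a nonzero nonunit of an atomic domain `A`. If every
prime ideal of `A` containing `x` contains a good atom, then `x` is an
HF-element. -/
theorem stmt_6 {A : Type*} [CommRing A] [IsDomain A] (hA : IsAtomicDomain A)
    (x : A) (hx0 : x ≠ 0) (hxu : ¬ IsUnit x)
    (h : ∀ P : Ideal A, P.IsPrime → x ∈ P → ∃ a ∈ P, IsGoodAtom a) :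
    IsHFElement x := by
  obtain ⟨g, y, hg, hgy⟩ := exists_prod_isGoodAtom_eq_mul x h
  have hy0 : y ≠ 0 := by
    rintro rfl
    rw [mul_zero] at hgy
    exact Multiset.prod_ne_zero (fun h0 => (hg 0 h0).1.ne_zero rfl) hgy
  obtain ⟨c, hc, hcy⟩ : ∃ c : Multiset A, (∀ a ∈ c, Irreducible a) ∧ Associated y c.prod := by
    by_cases hyu : IsUnit y
    · exact ⟨0, by simp, by simpa using associated_one_iff_isUnit.2 hyu⟩
    · obtain ⟨c, hc, rfl⟩ := hA y hy0 hyu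
      exact ⟨c, hc, Associated.refl _⟩
  have key : ∀ s : Multiset A, (∀ a ∈ s, Irreducible a) → s.prod = x →
      Multiset.card g = Multiset.card s + Multiset.card c := by
    intro s hs hsx
    rw [← Multiset.card_add]
    refine card_eq_of_forall_isGoodAtom g (s + c) hg ?_ ?_
    · intro a ha
      exact (Multiset.mem_add.1 ha).elim (hs a) (hc a)
    · rw [Multiset.prod_add, hgy, hsx]
      exact hcy.mul_left x
  intro s t hs ht hsx htx
  have h1 := key s hs hsx
  have h2 := key t ht htx
  omega
end

section
/- Let A be a Dedekind domain whose ideal class group has order at most 2. Then A is a half-factorial domain. -/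
open UniqueFactorizationMonoid in
open Classical in
/-- The weight of `x`: the sum over the prime factors of the ideal `(x)`, with multiplicity, of `2`
for each principal and `1` for each non-principal prime. The junk value at `x = 0` is `0`. -/
noncomputable def idealWeight {A : Type*} [CommRing A] [IsDedekindDomain A] (x : A) : ℕ :=
  ((normalizedFactors (Ideal.span {x})).map
    fun I : Ideal A => if I.IsPrincipal then 2 else 1).sum

section

variable {A : Type*} [CommRing A] [IsDedekindDomain A]

lemma idealWeight_one : idealWeight (1 : A) = 0 := by
  simp [idealWeight, ← Ideal.one_eq_top]

lemma idealWeight_mul {x y : A} (hx : x ≠ 0) (hy : y ≠ 0) :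
    idealWeight (x * y) = idealWeight x + idealWeight y := by
  unfold idealWeight
  rw [← Ideal.span_singleton_mul_span_singleton,
    UniqueFactorizationMonoid.normalizedFactors_mul (by simpa using hx) (by simpa using hy)]
  simp

lemma mul_eq_one_of_card_le_two {G : Type*} [Group G] (h : Cardinal.mk G ≤ 2) {a b : G}
    (ha : a ≠ 1) (hb : b ≠ 1) : a * b = 1 := by
  have : Finite G :=
    Cardinal.lt_aleph0_iff_finite.1 (h.trans_lt (Cardinal.natCast_lt_aleph0 (n := 2)))
  have := Fintype.ofFinite G
  have hcard : Fintype.card G ≤ 2 := by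
    rw [Cardinal.mk_fintype] at h
    exact_mod_cast h
  by_contra hab
  have h3 : 2 < Fintype.card G :=
    Fintype.two_lt_card_iff.2 ⟨1, a, a * b, ha.symm, Ne.symm hab, by simpa using hb⟩
  omega

lemma mul_isPrincipal_of_card_le_two (h : Cardinal.mk (ClassGroup A) ≤ 2) {I J : Ideal A}
    (hI : ¬ I.IsPrincipal) (hJ : ¬ J.IsPrincipal) : (I * J).IsPrincipal := by
  have ne_zero {K : Ideal A} (hK : ¬ K.IsPrincipal) : K ∈ nonZeroDivisors (Ideal A) :=
    mem_nonZeroDivisors_of_ne_zero fun h0 => hK (h0 ▸ bot_isPrincipal)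
  obtain ⟨I', rfl⟩ : ∃ I' : nonZeroDivisors (Ideal A), (I' : Ideal A) = I := ⟨⟨I, ne_zero hI⟩, rfl⟩
  obtain ⟨J', rfl⟩ : ∃ J' : nonZeroDivisors (Ideal A), (J' : Ideal A) = J := ⟨⟨J, ne_zero hJ⟩, rfl⟩
  have hI1 : ClassGroup.mk0 I' ≠ 1 := mt (ClassGroup.mk0_eq_one_iff I'.2).1 hI
  have hJ1 : ClassGroup.mk0 J' ≠ 1 := mt (ClassGroup.mk0_eq_one_iff J'.2).1 hJ
  have hIJ : ClassGroup.mk0 (I' * J') = 1 := by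
    rw [map_mul]
    exact mul_eq_one_of_card_le_two h hI1 hJ1
  exact (ClassGroup.mk0_eq_one_iff (I' * J').2).1 hIJ

/-- The ideal generated by an atom has no proper nontrivial principal divisors. -/
lemma eq_span_of_isPrincipal_of_dvd {a : A} (ha : Irreducible a) {I : Ideal A}
    (hI : I.IsPrincipal) (hI1 : I ≠ 1) (hdvd : I ∣ Ideal.span {a}) : I = Ideal.span {a} := by
  obtain ⟨b, rfl⟩ := hI
  change Ideal.span {b} ≠ 1 at hI1
  change Ideal.span {b} ∣ _ at hdvd
  change Ideal.span {b} = _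
  have hba : b ∣ a :=
    Ideal.span_singleton_le_span_singleton.1 (Ideal.dvd_iff_le.1 hdvd)
  have hb : ¬ IsUnit b := by
    simpa [Ideal.one_eq_top, Ideal.span_singleton_eq_top] using hI1
  exact Ideal.span_singleton_eq_span_singleton.2
    ((ha.dvd_iff.1 hba).resolve_left hb).symm

open UniqueFactorizationMonoid in
/-- If some prime factor of `(a)` is principal then it is `(a)` itself; otherwise the product of any
two prime factors is principal, hence equal to `(a)`. -/
lemma idealWeight_of_irreducible (h : Cardinal.mk (ClassGroup A) ≤ 2) {a : A}
    (ha : Irreducible a) : idealWeight a = 2 := by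
  classical
  have ha0 : Ideal.span {a} ≠ 0 := by simpa using ha.ne_zero
  have hprod : (normalizedFactors (Ideal.span {a})).prod = Ideal.span {a} :=
    prod_normalizedFactors_eq ha0 |>.trans (by simp)
  have hprime : ∀ p ∈ normalizedFactors (Ideal.span {a}), Prime p :=
    fun p hp => prime_of_normalized_factor p hp
  unfold idealWeight
  generalize normalizedFactors (Ideal.span {a}) = M at hprod hprime
  -- A proper principal subproduct is all of `(a)`, so no primes are left over.
  have empty (I : Ideal A) (N : Multiset (Ideal A)) (hN : ∀ p ∈ N, Prime p)
      (hIN : I * N.prod = Ideal.span {a}) (hI : I.IsPrincipal) (hI1 : I ≠ 1) : N = 0 := by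
    have hIa := eq_span_of_isPrincipal_of_dvd ha hI hI1 ⟨_, hIN.symm⟩
    rw [← hIa] at hIN ha0
    have hN1 : N.prod = 1 := mul_left_cancel₀ ha0 (hIN.trans (mul_one I).symm)
    refine Multiset.eq_zero_of_forall_notMem fun p hp => (hN p hp).not_isUnit ?_
    exact isUnit_of_dvd_one (hN1 ▸ Multiset.dvd_prod hp)
  by_cases hex : ∃ p ∈ M, p.IsPrincipal
  · obtain ⟨p, hp, hpp⟩ := hex
    obtain ⟨N, rfl⟩ := Multiset.exists_cons_of_mem hp
    rw [Multiset.prod_cons] at hprod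
    obtain rfl := empty p N (fun q hq => hprime q (Multiset.mem_cons_of_mem hq)) hprod hpp
      (hprime p hp).ne_one
    simp [hpp]
  · push Not at hex
    have hM : M.prod.IsPrincipal := hprod ▸ ⟨a, rfl⟩
    induction M using Multiset.induction with
    | empty =>
      refine absurd (Ideal.span_singleton_eq_top.1 ?_) ha.not_isUnit
      rw [← hprod, Multiset.prod_zero, Ideal.one_eq_top]
    | cons p N _ =>
      have hp := hex p (Multiset.mem_cons_self p N)
      induction N using Multiset.induction with
      | empty => exact absurd hM (by simpa using hp)
      | cons q N _ =>
        have hq := hex q (by simp)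
        rw [Multiset.prod_cons, Multiset.prod_cons, ← mul_assoc] at hprod
        obtain rfl := empty (p * q) N (fun r hr => hprime r (by simp [hr])) hprod
          (mul_isPrincipal_of_card_le_two h hp hq)
          (fun h1 => (hprime p (by simp)).not_isUnit (IsUnit.of_mul_eq_one _ h1))
        simp [hp, hq]

lemma idealWeight_prod (h : Cardinal.mk (ClassGroup A) ≤ 2) (s : Multiset A)
    (hs : ∀ a ∈ s, Irreducible a) : idealWeight s.prod = 2 * Multiset.card s := by
  induction s using Multiset.induction with
  | empty => simp [idealWeight_one]
  | cons a s ih =>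
    have hs' : ∀ b ∈ s, Irreducible b := fun b hb => hs b (Multiset.mem_cons_of_mem hb)
    have ha := hs a (Multiset.mem_cons_self a s)
    have h0 : s.prod ≠ 0 := Multiset.prod_ne_zero fun h0 => (hs' 0 h0).ne_zero rfl
    rw [Multiset.prod_cons, idealWeight_mul ha.ne_zero h0, ih hs',
      idealWeight_of_irreducible h ha, Multiset.card_cons]
    ring

end

/-- **(Carlitz/Zaks.)** A Dedekind domain whose ideal class group has order at most 2
is a half-factorial domain. -/
theorem stmt_8 {A : Type*} [CommRing A] [IsDomain A] [IsDedekindDomain A]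
    (h : Cardinal.mk (ClassGroup A) ≤ 2) : IsHFD A := by
  refine ⟨fun x hx hu => ?_, fun x _ _ s t hs ht hsx htx => ?_⟩
  · obtain ⟨s, hs, hsx, _⟩ := (WfDvdMonoid.not_isUnit_iff_exists_factors_eq x hx).1 hu
    exact ⟨s, hs, hsx⟩
  · have h2 := idealWeight_prod h s hs
    rw [hsx, ← htx, idealWeight_prod h t ht] at h2
    omega
end

section
/- Let A be a Dedekind domain in which every ideal class contains a nonzero prime ideal. If A possesses a good atom that is not a prime element, then the ideal class group of A has order at most 2; equivalently, if the ideal class group of A has order at least 3 (or is infinite), then every atom of A that is not a prime element is a bad atom. -/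
section Aux

open scoped nonZeroDivisors

open UniqueFactorizationMonoid in
/-- A product of at most three nonprincipal primes that happens to be principal is generated by an
atom. -/
lemma irreducible_of_span_eq_prod {A : Type*} [CommRing A] [IsDomain A] [IsDedekindDomain A]
    (s : Multiset (Ideal A)) (hs : ∀ P ∈ s, Prime P ∧ ¬ P.IsPrincipal) (h0 : s ≠ 0)
    (h3 : Multiset.card s ≤ 3) (z : A) (hz : Ideal.span {z} = s.prod) : Irreducible z := by
  have hprod : s.prod ≠ 0 := Multiset.prod_ne_zero fun h => (hs 0 h).1.ne_zero rfl
  have hnf : normalizedFactors s.prod = s := by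
    rw [normalizedFactors_prod_of_prime (fun P hP => (hs P hP).1)]
  have key : ∀ a : A, a ≠ 0 → ¬ IsUnit a → normalizedFactors (Ideal.span {a}) ≤ s →
      2 ≤ Multiset.card (normalizedFactors (Ideal.span {a})) := by
    intro a ha hu hle
    have ha' : Ideal.span {a} ≠ 0 := by simpa [Ideal.span_singleton_eq_bot] using ha
    have hp : (normalizedFactors (Ideal.span {a})).prod = Ideal.span {a} :=
      associated_iff_eq.mp (prod_normalizedFactors ha')
    by_contra! hlt
    interval_cases hc : Multiset.card (normalizedFactors (Ideal.span {a}))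
    · rw [Multiset.card_eq_zero] at hc
      rw [hc, Multiset.prod_zero, Ideal.one_eq_top, eq_comm, Ideal.span_singleton_eq_top] at hp
      exact hu hp
    · obtain ⟨P, hP⟩ := Multiset.card_eq_one.mp hc
      rw [hP, Multiset.prod_singleton] at hp
      refine (hs P (Multiset.mem_of_le hle (by simp [hP]))).2 ?_
      rw [hp]
      exact ⟨a, rfl⟩
  have hz0 : z ≠ 0 := by
    rintro rfl
    exact hprod (by rw [← hz]; simp)
  refine ⟨fun hu => ?_, fun a b hab => ?_⟩
  · rw [Ideal.span_singleton_eq_top.mpr hu, ← Ideal.one_eq_top] at hz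
    rw [← hz, normalizedFactors_one] at hnf
    exact h0 hnf.symm
  · by_contra! hn
    have ha0 : a ≠ 0 := by rintro rfl; simp [hab] at hz0
    have hb0 : b ≠ 0 := by rintro rfl; simp [hab] at hz0
    have hsum : normalizedFactors (Ideal.span {a}) + normalizedFactors (Ideal.span {b}) = s := by
      rw [← normalizedFactors_mul (by simpa [Ideal.span_singleton_eq_bot] using ha0)
        (by simpa [Ideal.span_singleton_eq_bot] using hb0),
        Ideal.span_singleton_mul_span_singleton, ← hab, hz, hnf]
    have h1 := key a ha0 hn.1 (hsum ▸ Multiset.le_add_right _ _)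
    have h2 := key b hb0 hn.2 (hsum ▸ Multiset.le_add_left _ _)
    have := congrArg Multiset.card hsum
    rw [Multiset.card_add] at this
    omega

lemma card_eq_one_of_irreducible_prod_s9 {A : Type*} [CommRing A] (v : Multiset A)
    (hv : ∀ b ∈ v, Irreducible b) (h : Irreducible v.prod) : Multiset.card v = 1 := by
  induction v using Multiset.induction_on with
  | empty => exact absurd (Multiset.prod_zero (M := A) ▸ isUnit_one) h.not_isUnit
  | cons b w _ =>
    rw [Multiset.prod_cons] at h
    rcases h.isUnit_or_isUnit rfl with hu | hu
    · exact absurd hu (hv b (by simp)).not_isUnit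
    · have : w = 0 := Multiset.eq_zero_of_forall_notMem fun c hc =>
        (hv c (Multiset.mem_cons_of_mem hc)).not_isUnit
          (isUnit_of_dvd_unit (Multiset.dvd_prod hc) hu)
      simp [this]

/-- A product of two atoms that also has at least three atomic factors yields an irredundant
unbalanced equality. -/
lemma isBadAtom_of_associated {A : Type*} [CommRing A] [IsDomain A] (a b : A) (ha : Irreducible a)
    (hb : Irreducible b) (t : Multiset A) (ht : ∀ c ∈ t, Irreducible c)
    (hc : 3 ≤ Multiset.card t) (hab : Associated (a * b) t.prod) (x : A) (hx : x = a ∨ x ∈ t) :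
    IsBadAtom x := by
  obtain ⟨w, hw⟩ := hab
  have hb' : Irreducible (b * w) := (irreducible_mul_units w).mpr hb
  rw [mul_assoc] at hw
  generalize b * (w : A) = b' at hb' hw
  -- Neither atom on the left is associated to a subproduct on the right.
  have key : ∀ p q : A, Irreducible p → Irreducible q → p * q = t.prod →
      ∀ v ≤ t, ¬ Associated p v.prod := by
    intro p q hp hq hpq v hv has
    have h1 := card_eq_one_of_irreducible_prod_s9 v (fun c h => ht c (Multiset.mem_of_le hv h))
      (has.irreducible hp)
    obtain ⟨r, rfl⟩ := Multiset.le_iff_exists_add.mp hv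
    rw [Multiset.prod_add] at hpq
    have h2 : Associated q r.prod := Associated.of_mul_left (hpq ▸ Associated.refl _) has hp.ne_zero
    have h3 := card_eq_one_of_irreducible_prod_s9 r (fun c h => ht c (by simp [h]))
      (h2.irreducible hq)
    rw [Multiset.card_add] at hc
    omega
  refine ⟨hx.elim (fun h => h ▸ ha) (ht x), {a, b'}, t, ⟨by simp, ?_, ?_, ht, by simpa using hw⟩,
    ?_, ?_, ?_⟩
  · rintro rfl; simp at hc
  · simp only [Multiset.insert_eq_cons, Multiset.mem_cons, Multiset.mem_singleton]
    rintro c (rfl | rfl) <;> assumption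
  · intro u v hu hv hu0 _ hus _ has
    have hcard : Multiset.card u = 1 := by
      have h1 := Multiset.card_lt_card (lt_of_le_of_ne hu hus)
      have h2 := Multiset.card_pos.mpr hu0
      simp at h1
      omega
    obtain ⟨c, rfl⟩ := Multiset.card_eq_one.mp hcard
    rw [Multiset.prod_singleton] at has
    have hmem : c ∈ ({a, b'} : Multiset A) := Multiset.mem_of_le hu (by simp)
    simp only [Multiset.insert_eq_cons, Multiset.mem_cons, Multiset.mem_singleton] at hmem
    rcases hmem with rfl | rfl
    · exact key c b' ha hb' hw v hv has
    · exact key c a hb' ha (by rw [mul_comm, hw]) v hv has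
  · simp; omega
  · rcases hx with rfl | hx
    · left; simp
    · exact Or.inr hx

lemma prime_of_mk0_ne_one {A : Type*} [CommRing A] [IsDomain A] [IsDedekindDomain A]
    (P : (Ideal A)⁰) (hP : (P : Ideal A).IsPrime) (h : ClassGroup.mk0 P ≠ 1) :
    Prime (P : Ideal A) ∧ ¬ (P : Ideal A).IsPrincipal :=
  ⟨Ideal.prime_of_isPrime (nonZeroDivisors.coe_ne_zero P) hP,
    fun hp => h ((ClassGroup.mk0_eq_one_iff P.2).mpr hp)⟩

lemma exists_span_eq {A : Type*} [CommRing A] [IsDomain A] [IsDedekindDomain A]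
    (I : (Ideal A)⁰) (h : ClassGroup.mk0 I = 1) :
    ∃ z : A, Ideal.span {z} = (I : Ideal A) := by
  obtain ⟨z, hz⟩ := (ClassGroup.mk0_eq_one_iff I.2).mp h
  exact ⟨z, hz.symm⟩

lemma exists_atom_two {A : Type*} [CommRing A] [IsDomain A] [IsDedekindDomain A]
    (P Q : (Ideal A)⁰) (hP : (P : Ideal A).IsPrime) (hQ : (Q : Ideal A).IsPrime)
    (hP1 : ClassGroup.mk0 P ≠ 1) (h : ClassGroup.mk0 P * ClassGroup.mk0 Q = 1) :
    ∃ z : A, Irreducible z ∧ Ideal.span {z} = (P : Ideal A) * Q := by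
  have hQ1 : ClassGroup.mk0 Q ≠ 1 := fun h' => hP1 (by simpa [h'] using h)
  obtain ⟨z, hz⟩ := exists_span_eq (P * Q) (by rwa [map_mul])
  refine ⟨z, irreducible_of_span_eq_prod {(P : Ideal A), (Q : Ideal A)} ?_ (by simp) (by simp) z
    (by simpa using hz), by simpa using hz⟩
  simp only [Multiset.insert_eq_cons, Multiset.mem_cons, Multiset.mem_singleton]
  rintro _ (rfl | rfl)
  · exact prime_of_mk0_ne_one P hP hP1
  · exact prime_of_mk0_ne_one Q hQ hQ1

lemma exists_atom_three {A : Type*} [CommRing A] [IsDomain A] [IsDedekindDomain A]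
    (P Q R : (Ideal A)⁰) (hP : (P : Ideal A).IsPrime) (hQ : (Q : Ideal A).IsPrime)
    (hR : (R : Ideal A).IsPrime) (hP1 : ClassGroup.mk0 P ≠ 1) (hQ1 : ClassGroup.mk0 Q ≠ 1)
    (hR1 : ClassGroup.mk0 R ≠ 1)
    (h : ClassGroup.mk0 P * ClassGroup.mk0 Q * ClassGroup.mk0 R = 1) :
    ∃ z : A, Irreducible z ∧ Ideal.span {z} = (P : Ideal A) * Q * R := by
  obtain ⟨z, hz⟩ := exists_span_eq (P * Q * R) (by rwa [map_mul, map_mul])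
  refine ⟨z, irreducible_of_span_eq_prod {(P : Ideal A), (Q : Ideal A), (R : Ideal A)} ?_ (by simp)
    (by simp) z (by simpa [mul_assoc] using hz), by simpa using hz⟩
  simp only [Multiset.insert_eq_cons, Multiset.mem_cons, Multiset.mem_singleton]
  rintro _ (rfl | rfl | rfl)
  · exact prime_of_mk0_ne_one P hP hP1
  · exact prime_of_mk0_ne_one Q hQ hQ1
  · exact prime_of_mk0_ne_one R hR hR1

open UniqueFactorizationMonoid in
/-- The ideal generated by a nonprime atom has at least two prime factors `P` and `Q`; these are not
principal, and neither is `P * Q` when a nontrivial cofactor `I` remains. -/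
lemma exists_factorization {A : Type*} [CommRing A] [IsDomain A] [IsDedekindDomain A]
    (x : A) (hx : Irreducible x) (hxp : ¬ Prime x) :
    ∃ P Q I : (Ideal A)⁰, (P : Ideal A).IsPrime ∧ (Q : Ideal A).IsPrime ∧
      Ideal.span {x} = (P : Ideal A) * Q * I ∧ ClassGroup.mk0 P ≠ 1 ∧ ClassGroup.mk0 Q ≠ 1 ∧
      ((I : Ideal A) ≠ 1 → ClassGroup.mk0 (P * Q) ≠ 1) := by
  have hx0 : Ideal.span {x} ≠ 0 := by simpa [Ideal.span_singleton_eq_bot] using hx.ne_zero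
  have hp : (normalizedFactors (Ideal.span {x})).prod = Ideal.span {x} :=
    associated_iff_eq.mp (prod_normalizedFactors hx0)
  have hpr : ∀ P ∈ normalizedFactors (Ideal.span {x}), Prime P :=
    fun P hP => prime_of_normalized_factor P hP
  have hxI : ¬ Prime (Ideal.span {x}) := fun h =>
    hxp ((Ideal.span_singleton_prime hx.ne_zero).mp (Ideal.isPrime_of_prime h))
  -- Irreducibility of `x` says that a principal ideal dividing `(x)` is trivial.
  have hirr : ∀ J K : Ideal A, J ≠ 0 → Ideal.span {x} = J * K → J.IsPrincipal →
      J = 1 ∨ K = 1 := by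
    rintro J K hJ0 hJK ⟨z, hz⟩
    change J = Ideal.span {z} at hz
    have hdvd : z ∣ x := by
      rw [← Ideal.span_singleton_le_span_singleton, ← hz, hJK]
      exact Ideal.mul_le_left (I := J) (J := K)
    rcases (hx.dvd_iff.mp hdvd) with hu | has
    · left
      rw [hz, Ideal.one_eq_top, Ideal.span_singleton_eq_top]
      exact hu
    · right
      have h1 : J = J * K := by
        rw [← hJK, hz]
        exact Ideal.span_singleton_eq_span_singleton.mpr has.symm
      exact (mul_eq_left₀ hJ0).mp h1.symm
  generalize normalizedFactors (Ideal.span {x}) = F at hp hpr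
  obtain ⟨P, F, rfl⟩ : ∃ P F', F = P ::ₘ F' := by
    refine (Multiset.empty_or_exists_mem F).elim (fun h => ?_) fun ⟨P, hP⟩ =>
      ⟨P, Multiset.exists_cons_of_mem hP⟩
    rw [h, Multiset.prod_zero, Ideal.one_eq_top, eq_comm, Ideal.span_singleton_eq_top] at hp
    exact absurd hp hx.not_isUnit
  have hP := hpr P (by simp)
  obtain ⟨Q, F, rfl⟩ : ∃ Q F', F = Q ::ₘ F' := by
    refine (Multiset.empty_or_exists_mem F).elim (fun h => ?_) fun ⟨P, hP⟩ =>
      ⟨P, Multiset.exists_cons_of_mem hP⟩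
    rw [h, Multiset.prod_cons, Multiset.prod_zero, mul_one] at hp
    exact absurd (hp ▸ hP) hxI
  have hQ := hpr Q (by simp)
  have hF : F.prod ≠ 0 := Multiset.prod_ne_zero fun h =>
    (hpr 0 (Multiset.mem_cons_of_mem (Multiset.mem_cons_of_mem h))).ne_zero rfl
  rw [Multiset.prod_cons, Multiset.prod_cons] at hp
  refine ⟨⟨P, mem_nonZeroDivisors_of_ne_zero hP.ne_zero⟩,
    ⟨Q, mem_nonZeroDivisors_of_ne_zero hQ.ne_zero⟩, ⟨F.prod, mem_nonZeroDivisors_of_ne_zero hF⟩,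
    Ideal.isPrime_of_prime hP, Ideal.isPrime_of_prime hQ, by simp [← hp, mul_assoc], ?_, ?_, ?_⟩
  · intro h
    rcases hirr P (Q * F.prod) hP.ne_zero hp.symm ((ClassGroup.mk0_eq_one_iff _).mp h) with h | h
    · exact hP.not_isUnit (isUnit_iff_eq_one.mpr h)
    · exact hQ.not_isUnit (IsUnit.of_mul_eq_one _ h)
  · intro h
    rcases hirr Q (P * F.prod) hQ.ne_zero (by rw [← hp]; exact mul_left_comm _ _ _)
      ((ClassGroup.mk0_eq_one_iff _).mp h) with h | h
    · exact hQ.not_isUnit (isUnit_iff_eq_one.mpr h)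
    · exact hP.not_isUnit (IsUnit.of_mul_eq_one _ h)
  · intro hI h
    rcases hirr (P * Q) F.prod (mul_ne_zero hP.ne_zero hQ.ne_zero)
      (by rw [← hp]; exact (mul_assoc _ _ _).symm)
      ((ClassGroup.mk0_eq_one_iff (mul_mem (mem_nonZeroDivisors_of_ne_zero hP.ne_zero)
        (mem_nonZeroDivisors_of_ne_zero hQ.ne_zero))).mp h) with h | h
    · exact hP.not_isUnit (IsUnit.of_mul_eq_one _ h)
    · exact hI h

end Aux

open scoped nonZeroDivisors in
/-- **Proposition 4, (iii) ⇒ (i) (Dedekind case).** Let `A` be a Dedekind domain in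
which every ideal class contains a nonzero prime ideal. If `A` has a good atom that
is not a prime element, then the ideal class group of `A` has order at most 2. -/
theorem stmt_9 {A : Type*} [CommRing A] [IsDomain A] [IsDedekindDomain A]
    (hcls : ∀ c : ClassGroup A, ∃ P : (Ideal A)⁰, (P : Ideal A).IsPrime ∧
      ClassGroup.mk0 P = c)
    (x : A) (hx : IsGoodAtom x) (hxp : ¬ Prime x) :
    Cardinal.mk (ClassGroup A) ≤ 2 := by
  obtain ⟨hirr, hgood⟩ := hx
  obtain ⟨P, Q, I, hP, hQ, hxI, hP1, hQ1, hPQ⟩ := exists_factorization x hirr hxp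
  by_contra hcard
  apply hgood
  by_cases hI : (I : Ideal A) = 1
  · rw [hI, mul_one] at hxI
    have hPQ1 : ClassGroup.mk0 P * ClassGroup.mk0 Q = 1 := by
      rw [← map_mul]
      exact (ClassGroup.mk0_eq_one_iff (P * Q).2).mpr ⟨x, by simp [← hxI]⟩
    have hQP := eq_inv_of_mul_eq_one_right hPQ1
    obtain ⟨h, hh1, hh2⟩ : ∃ h : ClassGroup A, h ≠ 1 ∧ h ≠ (ClassGroup.mk0 P)⁻¹ := by
      by_contra! hall
      apply hcard
      have huniv : (Set.univ : Set (ClassGroup A)) ⊆ {1, (ClassGroup.mk0 P)⁻¹} := by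
        intro h _
        by_cases h1 : h = 1
        · simp [h1]
        · simp [hall h h1]
      rw [← Cardinal.mk_univ]
      refine (Cardinal.mk_le_mk_of_subset huniv).trans (Cardinal.mk_insert_le.trans ?_)
      rw [Cardinal.mk_singleton, one_add_one_eq_two]
    have hne : ClassGroup.mk0 P * h ≠ 1 := fun h' => hh2 (eq_inv_of_mul_eq_one_right h')
    obtain ⟨R, hR, hRc⟩ := hcls h
    obtain ⟨R', hR', hRc'⟩ := hcls h⁻¹
    obtain ⟨S, hS, hSc⟩ := hcls (ClassGroup.mk0 P * h)⁻¹
    obtain ⟨S', hS', hSc'⟩ := hcls (ClassGroup.mk0 P * h)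
    obtain ⟨a, ha, haI⟩ := exists_atom_three P R S hP hR hS hP1 (by rwa [hRc])
      (by rw [hSc]; exact inv_ne_one.mpr hne) (by rw [hRc, hSc]; simp)
    obtain ⟨b, hb, hbI⟩ := exists_atom_three Q R' S' hQ hR' hS' hQ1
      (by rw [hRc']; simpa using hh1) (by rwa [hSc']) (by rw [hRc', hSc', hQP, ← mul_inv]; simp)
    obtain ⟨c, hc, hcI⟩ := exists_atom_two R R' hR hR' (by rwa [hRc]) (by rw [hRc, hRc']; simp)
    obtain ⟨d, hd, hdI⟩ := exists_atom_two S S' hS hS' (by rw [hSc]; exact inv_ne_one.mpr hne)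
      (by rw [hSc, hSc']; simp)
    refine isBadAtom_of_associated a b ha hb {x, c, d} ?_ (by simp) ?_ x (by simp)
    · simp only [Multiset.insert_eq_cons, Multiset.mem_cons, Multiset.mem_singleton]
      rintro _ (rfl | rfl | rfl) <;> assumption
    · rw [← Ideal.span_singleton_eq_span_singleton]
      simp only [Multiset.insert_eq_cons, Multiset.prod_cons, Multiset.prod_singleton,
        ← Ideal.span_singleton_mul_span_singleton, haI, hbI, hcI, hdI, hxI]
      ring
  · have hne := hPQ hI
    obtain ⟨P', hP', hPc'⟩ := hcls (ClassGroup.mk0 P)⁻¹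
    obtain ⟨Q', hQ', hQc'⟩ := hcls (ClassGroup.mk0 Q)⁻¹
    obtain ⟨W, hW, hWc⟩ := hcls (ClassGroup.mk0 (P * Q))
    have hPQI : ClassGroup.mk0 (P * Q) * ClassGroup.mk0 I = 1 := by
      rw [← map_mul]
      exact (ClassGroup.mk0_eq_one_iff (P * Q * I).2).mpr ⟨x, by simp [← hxI]⟩
    obtain ⟨y, hy, hyI⟩ := exists_atom_three P' Q' W hP' hQ' hW (by rw [hPc']; simpa using hP1)
      (by rw [hQc']; simpa using hQ1) (by rwa [hWc])
      (by rw [hPc', hQc', hWc, map_mul, ← mul_inv]; simp)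
    obtain ⟨c, hc, hcI⟩ := exists_atom_two P P' hP hP' hP1 (by rw [hPc']; simp)
    obtain ⟨d, hd, hdI⟩ := exists_atom_two Q Q' hQ hQ' hQ1 (by rw [hQc']; simp)
    obtain ⟨e, heI⟩ := exists_span_eq (W * I) (by rw [map_mul, hWc, hPQI])
    have he0 : e ≠ 0 := by
      rintro rfl
      exact nonZeroDivisors.coe_ne_zero (W * I) (by rw [← heI]; simp)
    have heu : ¬ IsUnit e := by
      intro hu
      rw [Ideal.span_singleton_eq_top.mpr hu, ← Ideal.one_eq_top] at heI
      exact hI (isUnit_iff_eq_one.mp (IsUnit.of_mul_eq_one_right _ heI.symm))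
    obtain ⟨f, hf, hfe⟩ := WfDvdMonoid.exists_factors e he0
    have hf0 : 0 < Multiset.card f := by
      rw [Multiset.card_pos]
      rintro rfl
      exact heu (by simpa using hfe.isUnit (by simp))
    refine isBadAtom_of_associated x y hirr hy (c ::ₘ d ::ₘ f) ?_ (by simp; omega) ?_ x (by simp)
    · simp only [Multiset.mem_cons]
      rintro z (rfl | rfl | hz)
      · exact hc
      · exact hd
      · exact hf z hz
    · rw [← Ideal.span_singleton_eq_span_singleton]
      simp only [Multiset.prod_cons, ← Ideal.span_singleton_mul_span_singleton, hcI, hdI, hxI, hyI,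
        Ideal.span_singleton_eq_span_singleton.mpr hfe, heI, Submonoid.coe_mul]
      ring
end

section
/- Let A be an other-half-factorial domain and S the saturated multiplicative subset of A generated by the prime elements of A. Then the localization A_S is an other-half-factorial domain (in particular, A_S is atomic). -/
/-- An *other-half-factorial domain (OHFD)*: an atomic domain in which any two
factorizations into atoms of the same nonzero nonunit that are distinct up to order
and associates have different numbers of factors. Equivalently, two atomic
factorizations of the same nonzero nonunit with the same number of factors coincide
up to order and associates. -/
def IsOHFD (A : Type*) [CommRing A] : Prop :=
  IsAtomicDomain A ∧
    ∀ s t : Multiset A, (∀ a ∈ s, Irreducible a) → (∀ b ∈ t, Irreducible b) →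
      s.prod = t.prod → s.prod ≠ 0 → ¬ IsUnit s.prod →
      Multiset.card s = Multiset.card t → Multiset.Rel Associated s t

/-- The saturated multiplicative subset of `A` generated by the prime elements of
`A`: the set of divisors of finite products of prime elements (it contains the
units, via the empty product). -/
def primeSat (A : Type*) [CommRing A] : Submonoid A where
  carrier := { a : A | ∃ s : Multiset A, (∀ p ∈ s, Prime p) ∧ a ∣ s.prod }
  one_mem' := ⟨0, by simp, by simp⟩
  mul_mem' := by
    rintro a b ⟨s, hs, ha⟩ ⟨t, ht, hb⟩
    refine ⟨s + t, fun p hp => ?_, ?_⟩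
    · rcases Multiset.mem_add.mp hp with h | h
      exacts [hs p h, ht p h]
    · rw [Multiset.prod_add]
      exact mul_dvd_mul ha hb

section PrimeSat

variable {A : Type*} [CommRing A]

/-- No prime element divides `y`. -/
def PrimeFree (y : A) : Prop := ∀ p : A, Prime p → ¬ p ∣ y

/-- The non-prime atoms, which are the elements of `A` that stay irreducible in `A_S`. -/
def IsNonprimeAtom (a : A) : Prop := Irreducible a ∧ ¬ Prime a

theorem prime_mem_primeSat {p : A} (hp : Prime p) : p ∈ primeSat A :=
  ⟨{p}, by simpa using hp, by simp⟩

/-- Up to associates, a nonzero element of `A_S` is the numerator of a fraction, and the prime factors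
of that numerator are units of `A_S`. -/
theorem exists_nonprime_factorization {B : Type*} [CommRing B] [Algebra A B]
    [IsLocalization (primeSat A) B] (hA : IsAtomicDomain A) {x : B} (hx : x ≠ 0) :
    ∃ m : Multiset A, (∀ a ∈ m, IsNonprimeAtom a) ∧ Associated (algebraMap A B m.prod) x := by
  classical
  obtain ⟨⟨b, σ⟩, hb⟩ := IsLocalization.surj (primeSat A) x
  simp only at hb
  have hσ : IsUnit (algebraMap A B σ) := IsLocalization.map_units B σ
  have hbx : Associated (algebraMap A B b) x := by
    rw [← hb]
    exact associated_mul_unit_left x _ hσ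
  by_cases hu : IsUnit b
  · refine ⟨0, by simp, ?_⟩
    rw [Multiset.prod_zero, map_one]
    exact (associated_one_iff_isUnit.mpr (hu.map _)).symm.trans hbx
  have hb0 : b ≠ 0 := by
    rintro rfl
    rw [map_zero] at hbx
    exact hx (hbx.eq_zero_iff.mp rfl)
  obtain ⟨m, hm, rfl⟩ := hA b hb0 hu
  refine ⟨m.filter (fun a => ¬ Prime a), fun a ha => ?_, Associated.trans ?_ hbx⟩
  · rw [Multiset.mem_filter] at ha
    exact ⟨hm a ha.1, ha.2⟩
  · have hp : (m.filter Prime).prod ∈ primeSat A :=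
      ⟨_, fun p hp => (Multiset.mem_filter.mp hp).2, dvd_rfl⟩
    have hpu : IsUnit (algebraMap A B (m.filter Prime).prod) :=
      IsLocalization.map_units B (⟨_, hp⟩ : primeSat A)
    conv_rhs => rw [← Multiset.filter_add_not Prime m, Multiset.prod_add, map_mul]
    exact (associated_unit_mul_left _ _ hpu).symm

variable [IsDomain A]

theorem primeFree_multiset_prod {m : Multiset A} (hm : ∀ a ∈ m, IsNonprimeAtom a) :
    PrimeFree m.prod := by
  intro p hp h
  obtain ⟨a, ha, hpa⟩ := hp.exists_mem_multiset_dvd h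
  obtain ⟨hirr, hnp⟩ := hm a ha
  exact hnp (((hp.irreducible.dvd_irreducible_iff_associated hirr).mp hpa).prime hp)

theorem primeSat_le_nonZeroDivisors : primeSat A ≤ nonZeroDivisors A := by
  rintro a ⟨s, hs, ha⟩
  refine mem_nonZeroDivisors_of_ne_zero ?_
  rintro rfl
  exact Multiset.prod_ne_zero (fun h => (hs 0 h).ne_zero rfl) (zero_dvd_iff.mp ha)

theorem prime_prod_dvd_of_dvd_mul {y : A} (hy : PrimeFree y) (s : Multiset A) :
    (∀ p ∈ s, Prime p) → ∀ w : A, s.prod ∣ y * w → s.prod ∣ w := by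
  induction s using Multiset.induction_on with
  | empty => intro _ w _; simp
  | cons p s ih =>
    intro hs w h
    have hp : Prime p := hs p (Multiset.mem_cons_self p s)
    rw [Multiset.prod_cons] at h ⊢
    obtain ⟨w, rfl⟩ :=
      (hp.dvd_or_dvd (dvd_of_mul_right_dvd h)).resolve_left (hy p hp)
    rw [mul_left_comm] at h
    exact mul_dvd_mul_left p (ih (fun q hq => hs q (Multiset.mem_cons_of_mem hq)) w
      ((mul_dvd_mul_iff_left hp.ne_zero).mp h))

/-- A prime-free factor can be cancelled from divisibility by an element of `S`; the case of a
product of primes is `prime_prod_dvd_of_dvd_mul`. -/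
theorem dvd_of_mem_primeSat_of_dvd_mul {y w σ : A} (hy : PrimeFree y) (hσ : σ ∈ primeSat A)
    (h : σ ∣ y * w) : σ ∣ w := by
  have hσ0 : σ ≠ 0 := nonZeroDivisors.ne_zero (primeSat_le_nonZeroDivisors hσ)
  obtain ⟨s, hs, d, hd⟩ := hσ
  have hd0 : d ≠ 0 := by
    rintro rfl
    exact Multiset.prod_ne_zero (fun h => (hs 0 h).ne_zero rfl) (by simpa using hd)
  have h1 : s.prod ∣ y * (w * d) := by
    rw [hd, ← mul_assoc]
    exact mul_dvd_mul_right h d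
  have h2 := prime_prod_dvd_of_dvd_mul hy s hs _ h1
  rw [hd] at h2
  exact (mul_dvd_mul_iff_right hd0).mp h2

theorem IsNonprimeAtom.primeFree {a : A} (ha : IsNonprimeAtom a) : PrimeFree a := by
  simpa using primeFree_multiset_prod (m := {a}) (by simpa using ha)

theorem IsNonprimeAtom.notMem_primeSat {a : A} (ha : IsNonprimeAtom a) : a ∉ primeSat A := by
  intro h
  -- Cancelling the prime-free factor `a` from `a ∣ a * 1` leaves `a ∣ 1`.
  exact ha.1.not_isUnit (isUnit_of_dvd_one
    (dvd_of_mem_primeSat_of_dvd_mul ha.primeFree h (by simp)))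

/-- When a product of primes times `a` factors as `b * c`, each of the primes divides `b` or `c`;
collecting them into `u` and `v` leaves a factorization of `a` itself. -/
theorem exists_split_of_prod_mul_eq (s : Multiset A) : (∀ p ∈ s, Prime p) →
    ∀ a b c : A, s.prod * a = b * c →
      ∃ u ∈ primeSat A, ∃ v ∈ primeSat A, ∃ b' c' : A, b = u * b' ∧ c = v * c' ∧ a = b' * c' := by
  induction s using Multiset.induction_on with
  | empty =>
    intro _ a b c h
    exact ⟨1, one_mem _, 1, one_mem _, b, c, by simp, by simp, by simpa using h⟩
  | cons p s ih =>
    intro hs a b c h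
    have hp : Prime p := hs p (Multiset.mem_cons_self p s)
    have ih := ih (fun q hq => hs q (Multiset.mem_cons_of_mem hq))
    rw [Multiset.prod_cons, mul_assoc] at h
    rcases hp.dvd_or_dvd (Dvd.intro _ h) with ⟨b, rfl⟩ | ⟨c, rfl⟩
    · obtain ⟨u, hu, v, hv, b', c', rfl, rfl, rfl⟩ :=
        ih a b c (mul_left_cancel₀ hp.ne_zero (by rw [h, mul_assoc]))
      exact ⟨p * u, mul_mem (prime_mem_primeSat hp) hu, v, hv, b', c',
        by rw [mul_assoc], rfl, rfl⟩
    · obtain ⟨u, hu, v, hv, b', c', rfl, rfl, rfl⟩ :=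
        ih a b c (mul_left_cancel₀ hp.ne_zero (by rw [h, mul_left_comm]))
      exact ⟨u, hu, p * v, mul_mem (prime_mem_primeSat hp) hv, b', c',
        rfl, by rw [mul_assoc], rfl⟩

variable {B : Type*} [CommRing B] [Algebra A B] [IsLocalization (primeSat A) B]

theorem dvd_of_map_dvd_map {y z : A} (hy : PrimeFree y)
    (h : algebraMap A B y ∣ algebraMap A B z) : y ∣ z := by
  obtain ⟨x, hx⟩ := h
  obtain ⟨⟨w, σ⟩, hw⟩ := IsLocalization.surj (primeSat A) x
  have hinj := IsLocalization.injective B (primeSat_le_nonZeroDivisors (A := A))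
  have hσ0 : (σ : A) ≠ 0 := nonZeroDivisors.ne_zero (primeSat_le_nonZeroDivisors σ.2)
  have h1 : σ * z = y * w := by
    apply hinj
    simp only at hw
    rw [map_mul, map_mul, hx, ← hw]
    ring
  obtain ⟨k, rfl⟩ := dvd_of_mem_primeSat_of_dvd_mul hy σ.2 (Dvd.intro _ h1)
  exact ⟨k, mul_left_cancel₀ hσ0 (by rw [h1]; ring)⟩

theorem associated_of_associated_map {y z : A} (hy : PrimeFree y) (hz : PrimeFree z)
    (h : Associated (algebraMap A B y) (algebraMap A B z)) : Associated y z :=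
  associated_of_dvd_dvd (dvd_of_map_dvd_map hy h.dvd) (dvd_of_map_dvd_map hz h.symm.dvd)

theorem irreducible_map {a : A} (ha : IsNonprimeAtom a) : Irreducible (algebraMap A B a) := by
  have hmap : ∀ {σ : A}, σ ∈ primeSat A → IsUnit (algebraMap A B σ) :=
    fun {σ} hσ => IsLocalization.map_units B (⟨σ, hσ⟩ : primeSat A)
  refine ⟨fun h => ?_, fun {x y} hxy => ?_⟩
  · obtain ⟨σ, ⟨s, hs, hσ⟩, hd⟩ := (IsLocalization.algebraMap_isUnit_iff (primeSat A)).mp h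
    exact ha.notMem_primeSat ⟨s, hs, hd.trans hσ⟩
  · obtain ⟨⟨b, σ⟩, hb⟩ := IsLocalization.surj (primeSat A) x
    obtain ⟨⟨c, τ⟩, hc⟩ := IsLocalization.surj (primeSat A) y
    simp only at hb hc
    have hinj := IsLocalization.injective B (primeSat_le_nonZeroDivisors (A := A))
    have h1 : (σ * τ : A) * a = b * c := by
      apply hinj
      rw [map_mul, map_mul, map_mul, ← hb, ← hc, hxy]
      ring
    -- An element of `S` need only divide a product of primes, so the cofactor `d` goes into `b`.
    obtain ⟨s, hs, d, hd⟩ := (σ * τ).2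
    obtain ⟨u, hu, v, hv, b', c', h2, h3, rfl⟩ :=
      exists_split_of_prod_mul_eq s hs a (d * b) c (by
        rw [hd, mul_assoc d b c, ← h1, Submonoid.coe_mul]; ring)
    rcases ha.1.isUnit_or_isUnit rfl with h | h
    · left
      have h4 : IsUnit (algebraMap A B (d * b)) := by
        rw [h2, map_mul]
        exact (hmap hu).mul (h.map _)
      rw [map_mul, ← hb] at h4
      exact isUnit_of_mul_isUnit_left (isUnit_of_mul_isUnit_right h4)
    · right
      have h4 : IsUnit (algebraMap A B c) := by
        rw [h3, map_mul]
        exact (hmap hv).mul (h.map _)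
      rw [← hc] at h4
      exact isUnit_of_mul_isUnit_left h4

theorem exists_nonprimeAtom_of_irreducible (hA : IsAtomicDomain A) {x : B} (hx : Irreducible x) :
    ∃ a : A, IsNonprimeAtom a ∧ Associated (algebraMap A B a) x := by
  have := IsLocalization.isDomain_of_le_nonZeroDivisors B (primeSat_le_nonZeroDivisors (A := A))
  obtain ⟨m, hm, hmx⟩ := exists_nonprime_factorization hA hx.ne_zero
  rcases Multiset.empty_or_exists_mem m with rfl | ⟨a, ha⟩
  · rw [Multiset.prod_zero, map_one] at hmx
    exact absurd (associated_one_iff_isUnit.mp hmx.symm) hx.not_isUnit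
  · have hax : algebraMap A B a ∣ x :=
      (map_dvd (algebraMap A B) (Multiset.dvd_prod ha)).trans hmx.dvd
    exact ⟨a, hm a ha, (irreducible_map (hm a ha)).associated_of_dvd hx hax⟩

theorem exists_lift_of_irreducible (hA : IsAtomicDomain A) (s : Multiset B) :
    (∀ x ∈ s, Irreducible x) → ∃ m : Multiset A, (∀ a ∈ m, IsNonprimeAtom a) ∧
      Multiset.Rel Associated (m.map (algebraMap A B)) s := by
  induction s using Multiset.induction_on with
  | empty => exact fun _ => ⟨0, by simp, by simp⟩
  | cons x s ih =>
    intro hs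
    obtain ⟨m, hm, hr⟩ := ih (fun y hy => hs y (Multiset.mem_cons_of_mem hy))
    obtain ⟨a, ha, hax⟩ := exists_nonprimeAtom_of_irreducible hA (hs x (Multiset.mem_cons_self x s))
    refine ⟨a ::ₘ m, ?_, ?_⟩
    · simpa using ⟨ha, hm⟩
    · rw [Multiset.map_cons]
      exact Multiset.Rel.cons hax hr

end PrimeSat

theorem associated_prod_of_rel {M : Type*} [CommMonoid M] {s t : Multiset M}
    (h : Multiset.Rel Associated s t) : Associated s.prod t.prod := by
  induction h with
  | zero => rfl
  | cons hab _ ih => simpa using hab.mul_mul ih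

/-- A unit can be absorbed into one factor of a nonempty product of atoms. -/
theorem exists_rel_associated_prod_eq {M : Type*} [CommMonoid M] {s : Multiset M} {x : M}
    (hs : ∀ a ∈ s, Irreducible a) (h0 : s ≠ 0) (hx : Associated s.prod x) :
    ∃ t : Multiset M, (∀ a ∈ t, Irreducible a) ∧ Multiset.Rel Associated s t ∧ t.prod = x := by
  obtain ⟨a, ha⟩ := Multiset.exists_mem_of_ne_zero h0
  obtain ⟨s, rfl⟩ := Multiset.exists_cons_of_mem ha
  obtain ⟨u, rfl⟩ := hx
  have hau : Associated a (a * u) := ⟨u, rfl⟩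
  refine ⟨(a * u) ::ₘ s, fun b hb => ?_,
    Multiset.Rel.cons hau (Multiset.rel_refl_of_refl_on fun _ _ => Associated.refl _), ?_⟩
  · rcases Multiset.mem_cons.mp hb with rfl | hb
    · exact hau.irreducible (hs a ha)
    · exact hs b (Multiset.mem_cons_of_mem hb)
  · rw [Multiset.prod_cons, Multiset.prod_cons, mul_right_comm]

/-- If `A` is an other-half-factorial domain and `S` is the saturated multiplicative
set generated by the prime elements of `A`, then the localization `A_S` is again an
other-half-factorial domain (in particular it is atomic). -/
theorem stmt_13 {A : Type*} [CommRing A] [IsDomain A] (hA : IsOHFD A) :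
    IsOHFD (Localization (primeSat A)) := by
  obtain ⟨hat, huniq⟩ := hA
  refine ⟨fun x hx hxu => ?_, fun s t hs ht hst hne hnu hcard => ?_⟩
  · obtain ⟨m, hm, hmx⟩ := exists_nonprime_factorization hat hx
    have h0 : m ≠ 0 := by
      rintro rfl
      rw [Multiset.prod_zero, map_one] at hmx
      exact hxu (associated_one_iff_isUnit.mp hmx.symm)
    obtain ⟨t, ht, -, htx⟩ := exists_rel_associated_prod_eq
      (s := m.map (algebraMap A (Localization (primeSat A)))) (x := x)
      (by simpa using fun a ha => irreducible_map (hm a ha)) (by simpa using h0)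
      (by rwa [← map_multiset_prod])
    exact ⟨t, ht, htx⟩
  · obtain ⟨m, hm, hms⟩ := exists_lift_of_irreducible hat s hs
    obtain ⟨n, hn, hnt⟩ := exists_lift_of_irreducible hat t ht
    have hmn : Associated m.prod n.prod := by
      apply associated_of_associated_map (B := Localization (primeSat A))
        (primeFree_multiset_prod hm) (primeFree_multiset_prod hn)
      rw [map_multiset_prod, map_multiset_prod]
      have h1 := associated_prod_of_rel hms
      have h2 := associated_prod_of_rel hnt
      rw [hst] at h1
      exact h1.trans h2.symm
    have hcm : m.card = s.card := by simpa using Multiset.card_eq_card_of_rel hms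
    have hcn : n.card = t.card := by simpa using Multiset.card_eq_card_of_rel hnt
    have hm0 : m ≠ 0 := by
      rintro rfl
      have : s = 0 := by simpa using hcm.symm
      exact hnu (by simp [this])
    -- Turns `m.prod` and `n.prod` being associated into the equality that uniqueness in `A` needs.
    obtain ⟨m', hm', hr, hprod⟩ := exists_rel_associated_prod_eq (fun a ha => (hm a ha).1) hm0 hmn
    have hcm' : m.card = m'.card := Multiset.card_eq_card_of_rel hr
    have hn0 : n.prod ≠ 0 := Multiset.prod_ne_zero fun h => (hn 0 h).1.ne_zero rfl
    have hnn : ¬ IsUnit n.prod := by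
      intro h
      obtain ⟨a, ha⟩ := Multiset.exists_mem_of_ne_zero hm0
      exact (hm a ha).1.not_isUnit (isUnit_of_dvd_unit (Multiset.dvd_prod ha) (hmn.isUnit_iff.mpr h))
    have hrel : Multiset.Rel Associated m n :=
      hr.trans _ (huniq m' n hm' (fun a ha => (hn a ha).1) hprod (hprod ▸ hn0) (hprod ▸ hnn)
        (by omega))
    have hrel' : Multiset.Rel Associated (m.map (algebraMap A (Localization (primeSat A))))
        (n.map (algebraMap A (Localization (primeSat A)))) :=
      Multiset.rel_map.mpr (hrel.mono fun a _ b _ h => h.map (algebraMap A _))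
    have hms' : Multiset.Rel Associated s (m.map (algebraMap A (Localization (primeSat A)))) :=
      Multiset.rel_flip.mp (hms.mono fun a _ b _ h => h.symm)
    exact (hms'.trans _ hrel').trans _ hnt
end

section
/- Every other-half-factorial domain is a unique factorization domain. -/
/-! ### Relations between atoms in a monoid with trivial units -/

namespace Atoms

variable {M : Type*} [CommMonoidWithZero M] [IsCancelMulZero M] [Subsingleton Mˣ]

/-- If an atom `x` divides a product of atoms other than `x`, cancelling the common atoms leaves a
relation with disjoint sides, one of which contains `x`. The other side is not a single atom,
since an atom is not a product of atoms in a nontrivial way. -/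
lemma exists_relation
    (hat : ∀ x : M, x ≠ 0 → ∃ s : Multiset M, (∀ a ∈ s, Irreducible a) ∧ s.prod = x)
    {x : M} (hx : Irreducible x) {g : Multiset M} (hg : ∀ a ∈ g, Irreducible a)
    (hxg : x ∉ g) (hdvd : x ∣ g.prod) :
    ∃ u v : Multiset M, u ≤ g ∧ (∀ a ∈ u, Irreducible a) ∧ (∀ a ∈ v, Irreducible a) ∧
      u.prod = v.prod ∧ Disjoint u v ∧ x ∈ v ∧ 2 ≤ Multiset.card u := by
  classical
  have : Nontrivial M := ⟨x, 1, fun h => hx.not_isUnit (h ▸ isUnit_one)⟩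
  obtain ⟨z, hz⟩ := hdvd
  have hg0 : g.prod ≠ 0 := by
    intro h
    exact (hg 0 (Multiset.prod_eq_zero_iff.1 h)).ne_zero rfl
  obtain ⟨w, hw, rfl⟩ := hat z (by rintro rfl; simp [hz] at hg0)
  rw [← Multiset.prod_cons] at hz
  have hirr : ∀ a ∈ x ::ₘ w, Irreducible a := by
    intro a ha
    rcases Multiset.mem_cons.1 ha with rfl | ha
    exacts [hx, hw a ha]
  have hu : ∀ a ∈ g - x ::ₘ w, Irreducible a := fun a ha =>
    hg a (Multiset.mem_of_le (Multiset.sub_le_self _ _) ha)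
  have hv : ∀ a ∈ x ::ₘ w - g, Irreducible a := fun a ha =>
    hirr a (Multiset.mem_of_le (Multiset.sub_le_self _ _) ha)
  have hxv : x ∈ x ::ₘ w - g := by
    rw [← Multiset.count_pos, Multiset.count_sub, Multiset.count_eq_zero_of_notMem hxg]
    simp
  have hprod : (g - x ::ₘ w).prod = (x ::ₘ w - g).prod := by
    have h1 : g - x ::ₘ w + g ∩ (x ::ₘ w) = g := by
      ext a; simp only [Multiset.count_add, Multiset.count_sub, Multiset.count_inter]; omega
    have h2 : x ::ₘ w - g + g ∩ (x ::ₘ w) = x ::ₘ w := by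
      ext a; simp only [Multiset.count_add, Multiset.count_sub, Multiset.count_inter]; omega
    have h0 : (g ∩ (x ::ₘ w)).prod ≠ 0 := by
      intro h
      exact (hg 0 (Multiset.mem_of_le Multiset.inter_le_left
        (Multiset.prod_eq_zero_iff.1 h))).ne_zero rfl
    apply mul_right_cancel₀ h0
    rw [← Multiset.prod_add, ← Multiset.prod_add, h1, h2, hz]
  refine ⟨g - x ::ₘ w, x ::ₘ w - g, Multiset.sub_le_self _ _, hu, hv, hprod, ?_, hxv, ?_⟩
  · rw [Multiset.disjoint_left]
    intro a ha hb
    rw [← Multiset.count_pos, Multiset.count_sub] at ha hb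
    omega
  · by_contra hlt
    obtain ⟨v', hv'⟩ := Multiset.exists_cons_of_mem hxv
    rw [hv', Multiset.prod_cons] at hprod
    have : Multiset.card (g - x ::ₘ w) = 0 ∨ Multiset.card (g - x ::ₘ w) = 1 := by omega
    rcases this with h | h
    · rw [Multiset.card_eq_zero.1 h, Multiset.prod_zero] at hprod
      exact hx.not_isUnit (IsUnit.of_mul_eq_one _ hprod.symm)
    · obtain ⟨y, hy⟩ := Multiset.card_eq_one.1 h
      have hyi : Irreducible y := hu y (by simp [hy])
      rw [hy, Multiset.prod_singleton] at hprod
      rcases hyi.isUnit_or_isUnit hprod with h | h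
      · exact hx.not_isUnit h
      · rw [isUnit_iff_eq_one.1 h, mul_one] at hprod
        exact hxg (Multiset.mem_of_le (Multiset.sub_le_self _ _)
          (by rw [hy]; simp [hprod]))

lemma exists_of_not_prime
    (hat : ∀ x : M, x ≠ 0 → ∃ s : Multiset M, (∀ a ∈ s, Irreducible a) ∧ s.prod = x)
    {x : M} (hx : Irreducible x) (hp : ¬ Prime x) :
    ∃ g : Multiset M, (∀ a ∈ g, Irreducible a) ∧ x ∉ g ∧ x ∣ g.prod := by
  have : Nontrivial M := ⟨x, 1, fun h => hx.not_isUnit (h ▸ isUnit_one)⟩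
  have : ∃ a b, x ∣ a * b ∧ ¬ x ∣ a ∧ ¬ x ∣ b := by
    by_contra! h
    exact hp ⟨hx.ne_zero, hx.not_isUnit, fun a b hab => or_iff_not_imp_left.2 (h a b hab)⟩
  obtain ⟨a, b, hab, ha, hb⟩ := this
  obtain ⟨s, hs, rfl⟩ := hat a (by rintro rfl; simp at ha)
  obtain ⟨t, ht, rfl⟩ := hat b (by rintro rfl; simp at hb)
  refine ⟨s + t, ?_, ?_, by rwa [Multiset.prod_add]⟩
  · intro y hy
    rcases Multiset.mem_add.1 hy with h | h
    exacts [hs y h, ht y h]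
  · intro h
    rcases Multiset.mem_add.1 h with h | h
    exacts [ha (Multiset.dvd_prod h), hb (Multiset.dvd_prod h)]

/-- Two disjoint relations that both have their shorter side first have the same supports. -/
lemma support_eq_of_lt
    (hinj : ∀ s t : Multiset M, (∀ a ∈ s, Irreducible a) → (∀ a ∈ t, Irreducible a) →
      s.prod = t.prod → Multiset.card s = Multiset.card t → s = t)
    {s t u v : Multiset M} (hs : ∀ a ∈ s, Irreducible a) (ht : ∀ a ∈ t, Irreducible a)
    (hu : ∀ a ∈ u, Irreducible a) (hv : ∀ a ∈ v, Irreducible a)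
    (hst : s.prod = t.prod) (huv : u.prod = v.prod) (dst : Disjoint s t) (duv : Disjoint u v)
    (cst : Multiset.card s < Multiset.card t) (cuv : Multiset.card u < Multiset.card v) (y : M) :
    (y ∈ u ↔ y ∈ s) ∧ (y ∈ v ↔ y ∈ t) := by
  classical
  obtain ⟨d, hd⟩ := Nat.exists_eq_add_of_lt cst
  obtain ⟨e, he⟩ := Nat.exists_eq_add_of_lt cuv
  -- The multiplicities make both sides contain the same number of atoms.
  have key : (e + 1) • s + (d + 1) • v = (e + 1) • t + (d + 1) • u := by
    apply hinj
    · intro a ha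
      rcases Multiset.mem_add.1 ha with h | h
      exacts [hs a (Multiset.mem_of_mem_nsmul h), hv a (Multiset.mem_of_mem_nsmul h)]
    · intro a ha
      rcases Multiset.mem_add.1 ha with h | h
      exacts [ht a (Multiset.mem_of_mem_nsmul h), hu a (Multiset.mem_of_mem_nsmul h)]
    · simp only [Multiset.prod_add, Multiset.prod_nsmul, hst, huv]
    · simp only [Multiset.card_add, Multiset.card_nsmul, hd, he]
      ring
  have hy := congrArg (Multiset.count y) key
  simp only [Multiset.count_add, Multiset.count_nsmul] at hy
  have h1 : 0 < Multiset.count y s → ¬ 0 < Multiset.count y t := by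
    simpa only [Multiset.count_pos] using fun h => Multiset.disjoint_left.1 dst h
  have h2 : 0 < Multiset.count y u → ¬ 0 < Multiset.count y v := by
    simpa only [Multiset.count_pos] using fun h => Multiset.disjoint_left.1 duv h
  have pos : ∀ m n : ℕ, 0 < (m + 1) * n ↔ 0 < n := by simp
  have p1 := pos e (Multiset.count y s)
  have p2 := pos e (Multiset.count y t)
  have p3 := pos d (Multiset.count y u)
  have p4 := pos d (Multiset.count y v)
  simp only [← Multiset.count_pos]
  generalize (e + 1) * Multiset.count y s = a1 at *
  generalize (e + 1) * Multiset.count y t = a2 at *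
  generalize (d + 1) * Multiset.count y u = a3 at *
  generalize (d + 1) * Multiset.count y v = a4 at *
  omega

/-- Any two nontrivial disjoint relations have the same supports, up to exchanging the sides. -/
lemma support_eq
    (hinj : ∀ s t : Multiset M, (∀ a ∈ s, Irreducible a) → (∀ a ∈ t, Irreducible a) →
      s.prod = t.prod → Multiset.card s = Multiset.card t → s = t)
    {s t u v : Multiset M} (hs : ∀ a ∈ s, Irreducible a) (ht : ∀ a ∈ t, Irreducible a)
    (hu : ∀ a ∈ u, Irreducible a) (hv : ∀ a ∈ v, Irreducible a)
    (hst : s.prod = t.prod) (huv : u.prod = v.prod) (dst : Disjoint s t) (duv : Disjoint u v)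
    (nst : s ≠ t) (nuv : u ≠ v) :
    (∀ y, (y ∈ u ↔ y ∈ s) ∧ (y ∈ v ↔ y ∈ t)) ∨ (∀ y, (y ∈ u ↔ y ∈ t) ∧ (y ∈ v ↔ y ∈ s)) := by
  have cst : Multiset.card s ≠ Multiset.card t := fun h => nst (hinj s t hs ht hst h)
  have cuv : Multiset.card u ≠ Multiset.card v := fun h => nuv (hinj u v hu hv huv h)
  rcases cst.lt_or_gt with c₁ | c₁ <;> rcases cuv.lt_or_gt with c₂ | c₂
  · exact .inl (support_eq_of_lt hinj hs ht hu hv hst huv dst duv c₁ c₂)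
  · exact .inr fun y => (support_eq_of_lt hinj hs ht hv hu hst huv.symm dst duv.symm c₁ c₂ y).symm
  · exact .inr (support_eq_of_lt hinj ht hs hu hv hst.symm huv dst.symm duv c₁ c₂)
  · exact .inl fun y =>
      (support_eq_of_lt hinj ht hs hv hu hst.symm huv.symm dst.symm duv.symm c₁ c₂ y).symm

/-- An atom can divide a product of other atoms only by virtue of a relation supported on the
fixed one. -/
lemma dvd_cases
    (hat : ∀ x : M, x ≠ 0 → ∃ s : Multiset M, (∀ a ∈ s, Irreducible a) ∧ s.prod = x)
    (hinj : ∀ s t : Multiset M, (∀ a ∈ s, Irreducible a) → (∀ a ∈ t, Irreducible a) →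
      s.prod = t.prod → Multiset.card s = Multiset.card t → s = t)
    {s t : Multiset M} (hs : ∀ a ∈ s, Irreducible a) (ht : ∀ a ∈ t, Irreducible a)
    (hst : s.prod = t.prod) (dst : Disjoint s t) (nst : s ≠ t)
    {x : M} (hx : Irreducible x) {g : Multiset M} (hg : ∀ a ∈ g, Irreducible a)
    (hxg : x ∉ g) (hdvd : x ∣ g.prod) :
    ∃ u ≤ g, 2 ≤ Multiset.card u ∧
      (((∀ y, y ∈ u ↔ y ∈ s) ∧ x ∈ t) ∨ ((∀ y, y ∈ u ↔ y ∈ t) ∧ x ∈ s)) := by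
  obtain ⟨u, v, hug, hu, hv, huv, duv, hxv, hc⟩ := exists_relation hat hx hg hxg hdvd
  refine ⟨u, hug, hc, ?_⟩
  have nuv : u ≠ v := by
    rintro rfl
    exact Multiset.disjoint_left.1 duv hxv hxv
  rcases support_eq hinj hs ht hu hv hst huv dst duv nst nuv with h | h
  · exact .inl ⟨fun y => (h y).1, (h x).2.1 hxv⟩
  · exact .inr ⟨fun y => (h y).1, (h x).2.1 hxv⟩

open Classical in
/-- For `π ∈ s` and `ξ ∉ s`, the multiset `{ξ} ∪ (supp s \ {π})`. When `ξ` lies in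
`t` disjoint from `s`, it misses the atom `π` of `s` and contains just one atom of `t`, to the
first power, so its product has no unexpected atomic divisors. -/
noncomputable def half (s : Multiset M) (π ξ : M) : Multiset M := ξ ::ₘ s.dedup.erase π

lemma mem_half {s : Multiset M} {π ξ x : M} : x ∈ half s π ξ ↔ x = ξ ∨ (x ≠ π ∧ x ∈ s) := by
  classical
  unfold half
  rw [Multiset.mem_cons]
  convert Iff.rfl using 2
  convert (Multiset.Nodup.mem_erase_iff (Multiset.nodup_dedup s)).symm using 2
  simp

/-- An atom outside `half s π ξ` does not divide its product: by `dvd_cases`, a divisibility would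
yield a part of the half with at least two factors and with the support of `s` or of `t`. The former
is impossible as `π` is missing, the latter as `ξ` is the only member in `t` and occurs once. -/
lemma not_dvd_half
    (hat : ∀ x : M, x ≠ 0 → ∃ s : Multiset M, (∀ a ∈ s, Irreducible a) ∧ s.prod = x)
    (hinj : ∀ s t : Multiset M, (∀ a ∈ s, Irreducible a) → (∀ a ∈ t, Irreducible a) →
      s.prod = t.prod → Multiset.card s = Multiset.card t → s = t)
    {s t : Multiset M} (hs : ∀ a ∈ s, Irreducible a) (ht : ∀ a ∈ t, Irreducible a)
    (hst : s.prod = t.prod) (dst : Disjoint s t) (nst : s ≠ t)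
    {π ξ : M} (hπ : π ∈ s) (hξ : ξ ∈ t)
    {x : M} (hx : Irreducible x) (hxg : x ∉ half s π ξ) : ¬ x ∣ (half s π ξ).prod := by
  classical
  intro hdvd
  have hg : ∀ a ∈ half s π ξ, Irreducible a := by
    intro a ha
    rcases mem_half.1 ha with rfl | h
    exacts [ht _ hξ, hs _ h.2]
  obtain ⟨u, hug, hc, ⟨h, -⟩ | ⟨h, -⟩⟩ := dvd_cases hat hinj hs ht hst dst nst hx hg hxg hdvd
  · rcases mem_half.1 (Multiset.mem_of_le hug ((h π).2 hπ)) with hm | hm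
    · exact Multiset.disjoint_left.1 dst hπ (hm ▸ hξ)
    · exact hm.1 rfl
  ·
    -- Here `u` consists of copies of `ξ`, which has multiplicity one in `half s π ξ`.
    have hall : ∀ y ∈ u, y = ξ := by
      intro y hy
      rcases mem_half.1 (Multiset.mem_of_le hug hy) with hm | hm
      · exact hm
      · exact (Multiset.disjoint_left.1 dst hm.2 ((h y).1 hy)).elim
    have hcount : Multiset.count ξ (half s π ξ) = 1 := by
      have : ξ ∉ s := fun hm => Multiset.disjoint_left.1 dst hm hξ
      unfold half
      rw [Multiset.count_cons_self, Multiset.count_eq_zero_of_notMem]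
      intro hm
      exact this (Multiset.mem_dedup.1 (Multiset.mem_of_mem_erase hm))
    have h1 := Multiset.count_le_of_le ξ hug
    rw [Multiset.eq_replicate_card.2 hall, Multiset.count_replicate_self, hcount] at h1
    omega

/-- Every nonprime atom divides exactly one of the two half products, so it does not divide the
sum of their representatives in a ring. -/
lemma dvd_xor
    (hat : ∀ x : M, x ≠ 0 → ∃ s : Multiset M, (∀ a ∈ s, Irreducible a) ∧ s.prod = x)
    (hinj : ∀ s t : Multiset M, (∀ a ∈ s, Irreducible a) → (∀ a ∈ t, Irreducible a) →
      s.prod = t.prod → Multiset.card s = Multiset.card t → s = t)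
    {s t : Multiset M} (hs : ∀ a ∈ s, Irreducible a) (ht : ∀ a ∈ t, Irreducible a)
    (hst : s.prod = t.prod) (dst : Disjoint s t) (nst : s ≠ t)
    {π ξ : M} (hπ : π ∈ s) (hξ : ξ ∈ t)
    {x : M} (hx : Irreducible x) (hp : ¬ Prime x) :
    (x ∣ (half t ξ π).prod ∧ ¬ x ∣ (half s π ξ).prod) ∨
      (x ∣ (half s π ξ).prod ∧ ¬ x ∣ (half t ξ π).prod) := by
  obtain ⟨g, hg, hxg, hdvd⟩ := exists_of_not_prime hat hx hp
  have hmem : x ∈ s ∨ x ∈ t := by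
    obtain ⟨u, -, -, ⟨-, h⟩ | ⟨-, h⟩⟩ := dvd_cases hat hinj hs ht hst dst nst hx hg hxg hdvd
    exacts [.inr h, .inl h]
  have hd : ∀ y ∈ s, y ∉ t := fun y h => Multiset.disjoint_left.1 dst h
  have h1 : x ∉ half s π ξ → ¬ x ∣ (half s π ξ).prod :=
    not_dvd_half hat hinj hs ht hst dst nst hπ hξ hx
  have h2 : x ∉ half t ξ π → ¬ x ∣ (half t ξ π).prod :=
    not_dvd_half hat hinj ht hs hst.symm dst.symm nst.symm hξ hπ hx
  have h3 : x ∈ half s π ξ → x ∣ (half s π ξ).prod := Multiset.dvd_prod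
  have h4 : x ∈ half t ξ π → x ∣ (half t ξ π).prod := Multiset.dvd_prod
  rw [mem_half] at h1 h2 h3 h4
  grind

end Atoms

/-! ### From an other-half-factorial domain to its monoid of associate classes and back -/

section Domain

variable {A : Type*} [CommRing A] [IsDomain A]

lemma associates_atomic (hA : IsOHFD A) (x : Associates A) (hx : x ≠ 0) :
    ∃ s : Multiset (Associates A), (∀ a ∈ s, Irreducible a) ∧ s.prod = x := by
  obtain ⟨x, rfl⟩ := Associates.mk_surjective x
  by_cases hu : IsUnit x
  · exact ⟨0, by simp, by simpa using (Associates.mk_eq_one.2 hu).symm⟩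
  · obtain ⟨s, hs, rfl⟩ := hA.1 x (by rintro rfl; simp at hx) hu
    refine ⟨s.map Associates.mk, ?_, Associates.prod_mk⟩
    intro a ha
    obtain ⟨b, hb, rfl⟩ := Multiset.mem_map.1 ha
    exact Associates.irreducible_mk.2 (hs b hb)

lemma exists_lift (s : Multiset (Associates A)) : ∃ s' : Multiset A, s'.map Associates.mk = s := by
  refine ⟨s.map Quotient.out, ?_⟩
  rw [Multiset.map_map]
  conv_rhs => rw [← Multiset.map_id s]
  exact Multiset.map_congr rfl fun a _ => Quotient.out_eq a

lemma associates_inj (hA : IsOHFD A) (s t : Multiset (Associates A))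
    (hs : ∀ a ∈ s, Irreducible a) (ht : ∀ a ∈ t, Irreducible a)
    (hst : s.prod = t.prod) (hc : Multiset.card s = Multiset.card t) : s = t := by
  obtain ⟨s, rfl⟩ := exists_lift s
  obtain ⟨t, rfl⟩ := exists_lift t
  have hs' : ∀ a ∈ s, Irreducible a := fun a ha =>
    Associates.irreducible_mk.1 (hs _ (Multiset.mem_map_of_mem _ ha))
  have ht' : ∀ a ∈ t, Irreducible a := fun a ha =>
    Associates.irreducible_mk.1 (ht _ (Multiset.mem_map_of_mem _ ha))
  rw [Associates.prod_mk, Associates.prod_mk, Associates.mk_eq_mk_iff_associated] at hst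
  simp only [Multiset.card_map] at hc
  rcases s.empty_or_exists_mem with rfl | ⟨a, ha⟩
  · rw [Multiset.card_zero] at hc
    rw [Multiset.card_eq_zero.1 hc.symm]
  -- Equality of the products up to a unit becomes equality once the unit is absorbed in `a`.
  obtain ⟨c, hc'⟩ := hst
  obtain ⟨r, rfl⟩ := Multiset.exists_cons_of_mem ha
  have hac : Associated a (a * c) := ⟨c, rfl⟩
  have hr : ∀ b ∈ (a * c) ::ₘ r, Irreducible b := by
    intro b hb
    rcases Multiset.mem_cons.1 hb with rfl | hb
    · exact hac.irreducible (hs' a ha)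
    · exact hs' b (Multiset.mem_cons_of_mem hb)
  have hrel := hA.2 ((a * c) ::ₘ r) t hr ht'
    (by rw [← hc', Multiset.prod_cons, Multiset.prod_cons]; ring)
    (fun h => (hr 0 (Multiset.prod_eq_zero_iff.1 h)).ne_zero rfl)
    (fun h => (hr _ (Multiset.mem_cons_self _ _)).not_isUnit
      (isUnit_of_dvd_unit (Multiset.dvd_prod (Multiset.mem_cons_self _ _)) h))
    (by simpa using hc)
  have : ((a * c) ::ₘ r).map Associates.mk = t.map Associates.mk := by
    rw [← Multiset.rel_eq, Multiset.rel_map]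
    exact hrel.mono fun _ _ _ _ h => Associates.mk_eq_mk_iff_associated.2 h
  rw [← this, Multiset.map_cons, Multiset.map_cons, Associates.mk_eq_mk_iff_associated.2 hac]

/-- A nonzero element with no nonprime atomic divisor is a product of primes up to a unit. -/
lemma exists_primes (hA : IsOHFD A) {y : A} (hy : y ≠ 0)
    (h : ∀ x, Irreducible x → ¬ Prime x → ¬ x ∣ y) :
    ∃ s : Multiset A, (∀ a ∈ s, Prime a) ∧ Associated s.prod y := by
  by_cases hu : IsUnit y
  · exact ⟨0, by simp, by simpa using (associated_one_iff_isUnit.2 hu).symm⟩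
  · obtain ⟨s, hs, rfl⟩ := hA.1 y hy hu
    refine ⟨s, fun a ha => ?_, .refl _⟩
    by_contra hp
    exact h a (hs a ha) hp (Multiset.dvd_prod ha)

/-- An atom dividing a product of primes is one of them up to a unit: otherwise every prime
factor could be cancelled. -/
lemma prime_of_dvd_primes {x : A} (hx : Irreducible x) (s : Multiset A) :
    (∀ a ∈ s, Prime a) → x ∣ s.prod → Prime x := by
  induction s using Multiset.induction with
  | empty => exact fun _ h => (hx.not_isUnit (isUnit_of_dvd_one (by simpa using h))).elim
  | cons p s ih =>
    intro hs h
    have hp : Prime p := hs p (Multiset.mem_cons_self _ _)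
    rw [Multiset.prod_cons] at h
    obtain ⟨z, hz⟩ := h
    rcases hp.dvd_or_dvd (Dvd.intro _ hz) with h | ⟨w, rfl⟩
    · exact ((hp.irreducible.associated_of_dvd hx h).prime_iff).1 hp
    · refine ih (fun a ha => hs a (Multiset.mem_cons_of_mem ha)) ⟨w, ?_⟩
      apply mul_left_cancel₀ hp.ne_zero
      rw [hz]; ring

/-- If products of primes exist in every ideal `(π, ξ)`, `ξ ∈ t`, then one exists in
`(π, ∏ t)`. -/
lemma exists_primes_mem (π : A) (t : Multiset A)
    (h : ∀ ξ ∈ t, ∃ q : Multiset A, (∀ a ∈ q, Prime a) ∧ ∃ c d, q.prod = π * c + ξ * d) :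
    ∃ q : Multiset A, (∀ a ∈ q, Prime a) ∧ ∃ c d, q.prod = π * c + t.prod * d := by
  induction t using Multiset.induction with
  | empty => exact ⟨0, by simp, 0, 1, by simp⟩
  | cons ξ t ih =>
    obtain ⟨q, hq, c, d, e⟩ := ih fun η hη => h η (Multiset.mem_cons_of_mem hη)
    obtain ⟨q', hq', c', d', e'⟩ := h ξ (Multiset.mem_cons_self _ _)
    refine ⟨q' + q, ?_, c' * (π * c + t.prod * d) + ξ * d' * c, d' * d, ?_⟩
    · intro a ha
      rcases Multiset.mem_add.1 ha with h | h
      exacts [hq' a h, hq a h]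
    · rw [Multiset.prod_add, e, e', Multiset.prod_cons]; ring

lemma irreducible_prime (hA : IsOHFD A) {x : A} (hx : Irreducible x) : Prime x := by
  by_contra hp
  have hat := associates_atomic hA
  have hinj := associates_inj hA
  have hx' : Irreducible (Associates.mk x) := Associates.irreducible_mk.2 hx
  obtain ⟨g, hg, hxg, hdvd⟩ := Atoms.exists_of_not_prime hat hx'
    (fun h => hp (Associates.prime_mk.1 h))
  obtain ⟨t, s, -, ht, hs, hts, dts, hxs, -⟩ := Atoms.exists_relation hat hx' hg hxg hdvd
  have nst : s ≠ t := by
    rintro rfl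
    exact Multiset.disjoint_left.1 dts hxs hxs
  have main : ∀ ξ : A, Associates.mk ξ ∈ t →
      ∃ q : Multiset A, (∀ a ∈ q, Prime a) ∧ ∃ c d, q.prod = x * c + ξ * d := by
    intro ξ hξ
    obtain ⟨f, hf⟩ := Associates.mk_surjective (Atoms.half t (Associates.mk ξ) (Associates.mk x)).prod
    obtain ⟨k, hk⟩ := Associates.mk_surjective (Atoms.half s (Associates.mk x) (Associates.mk ξ)).prod
    have hxf : x ∣ f := by
      rw [← Associates.mk_le_mk_iff_dvd, hf]
      exact Multiset.dvd_prod (Atoms.mem_half.2 (.inl rfl))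
    have hξk : ξ ∣ k := by
      rw [← Associates.mk_le_mk_iff_dvd, hk]
      exact Multiset.dvd_prod (Atoms.mem_half.2 (.inl rfl))
    have hnd : ∀ y, Irreducible y → ¬ Prime y → ¬ y ∣ f + k := by
      intro y hy hyp hd
      have := Atoms.dvd_xor hat hinj hs ht hts.symm dts.symm nst hxs hξ
        (Associates.irreducible_mk.2 hy) (fun h => hyp (Associates.prime_mk.1 h))
      rw [← hf, ← hk, Associates.mk_dvd_mk, Associates.mk_dvd_mk] at this
      rcases this with ⟨h1, h2⟩ | ⟨h1, h2⟩
      · exact h2 ((dvd_add_right h1).1 hd)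
      · exact h2 ((dvd_add_left h1).1 hd)
    obtain ⟨q, hq, c, hc⟩ := exists_primes hA (y := f + k)
      (fun h => hnd x hx hp (by rw [h]; exact dvd_zero x)) hnd
    obtain ⟨f', rfl⟩ := hxf
    obtain ⟨k', rfl⟩ := hξk
    refine ⟨q, hq, f' * ↑c⁻¹, k' * ↑c⁻¹, ?_⟩
    rw [← mul_assoc, ← mul_assoc, ← add_mul, ← hc, Units.mul_inv_cancel_right]
  obtain ⟨t, rfl⟩ := exists_lift t
  obtain ⟨q, hq, c, d, e⟩ := exists_primes_mem x t
    fun ξ hξ => main ξ (Multiset.mem_map_of_mem _ hξ)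
  have hxt : x ∣ t.prod := by
    rw [← Associates.mk_dvd_mk, ← Associates.prod_mk, hts]
    exact Multiset.dvd_prod hxs
  exact hp (prime_of_dvd_primes hx q hq (e ▸ (dvd_mul_right x c).add (hxt.mul_right d)))

end Domain

/-- **(Coykendall–Smith.)** Every other-half-factorial domain is a unique
factorization domain. -/
theorem stmt_14 {A : Type*} [CommRing A] [IsDomain A] (hA : IsOHFD A) :
    UniqueFactorizationMonoid A := by
  apply UniqueFactorizationMonoid.of_exists_prime_factors
  intro a ha
  exact exists_primes hA ha fun x hx hp => (hp (irreducible_prime hA hx)).elim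
end
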